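/- arXiv:2203.04620 — 2 statements merged into one kernel-verified Lean document; each statement's English description precedes it below -/
import Mathlib

section
/- Let P_1, …, P_l be lattice polytopes in ℝ^n with dim(P_1+⋯+P_l) = n, and let P := P_1 * ⋯ * P_l be their Cayley polytope. Then P is a Gorenstein polytope of codegree l if and only if the Minkowski sum P_1 + ⋯ + P_l is reflexive. -/
open Pointwise

/-- A point of `ℝ^d` is a lattice point if all its coordinates are integers. -/
def IsLatticePt {d : ℕ} (x : Fin d → ℝ) : Prop := ∀ i, ∃ z : ℤ, x i = (z : ℝ)

/-- A lattice polytope is the (non-empty) convex hull of finitely many lattice points. -/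
def IsLatticePolytope {d : ℕ} (P : Set (Fin d → ℝ)) : Prop :=
  ∃ V : Finset (Fin d → ℝ), V.Nonempty ∧ (∀ v ∈ V, IsLatticePt v) ∧
    P = convexHull ℝ (V : Set (Fin d → ℝ))

/-- The dimension of a polytope: the dimension of the direction of its affine hull. -/
noncomputable def polyDim {d : ℕ} (P : Set (Fin d → ℝ)) : ℕ :=
  Module.finrank ℝ (affineSpan ℝ P).direction

/-- A polytope is hollow if its relative interior contains no lattice point. -/
def IsHollow {d : ℕ} (P : Set (Fin d → ℝ)) : Prop :=
  ∀ x ∈ intrinsicInterior ℝ P, ¬ IsLatticePt x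

/-- A facet of `P`: a non-empty exposed face of dimension `dim P - 1`. -/
def IsFacet {d : ℕ} (P F : Set (Fin d → ℝ)) : Prop :=
  IsExposed ℝ P F ∧ F.Nonempty ∧ polyDim F + 1 = polyDim P

/-- An affine functional is integral on `P` if it takes integer values on all
lattice points of the affine hull of `P`. -/
def IsIntegralOn {d : ℕ} (P : Set (Fin d → ℝ)) (u : (Fin d → ℝ) →ᵃ[ℝ] ℝ) : Prop :=
  ∀ y ∈ affineSpan ℝ P, IsLatticePt y → ∃ z : ℤ, u y = (z : ℝ)

/-- `P` is reflexive: there is a lattice point `x` in the relative interior of `P`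
such that every facet of `P` has lattice distance one from `x`, i.e. for every facet `F`
there is an integral affine functional that is constant on `F` and exceeds its value
at `x` by exactly `1`. -/
def IsReflexivePolytope {d : ℕ} (P : Set (Fin d → ℝ)) : Prop :=
  ∃ x ∈ intrinsicInterior ℝ P, IsLatticePt x ∧
    ∀ F : Set (Fin d → ℝ), IsFacet P F →
      ∃ u : (Fin d → ℝ) →ᵃ[ℝ] ℝ, IsIntegralOn P u ∧ ∀ f ∈ F, u f = u x + 1

/-- `P` is Gorenstein if some positive integer multiple `r • P` is reflexive. -/
def IsGorenstein {d : ℕ} (P : Set (Fin d → ℝ)) : Prop :=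
  ∃ r : ℕ, 0 < r ∧ IsReflexivePolytope ((r : ℝ) • P)

/-- `P` is Gorenstein of codegree `r` if `r • P` is reflexive (`r` positive). -/
def IsGorensteinOfCodeg {d : ℕ} (P : Set (Fin d → ℝ)) (r : ℕ) : Prop :=
  0 < r ∧ IsReflexivePolytope ((r : ℝ) • P)

/-- The codegree of `P`: the smallest positive integer `r` such that `r • P` is not hollow. -/
noncomputable def polyCodeg {d : ℕ} (P : Set (Fin d → ℝ)) : ℕ :=
  sInf {r : ℕ | 0 < r ∧ ¬ IsHollow ((r : ℝ) • P)}

/-- The degree of `P`: `dim P + 1 - codeg P`. -/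
noncomputable def polyDeg {d : ℕ} (P : Set (Fin d → ℝ)) : ℕ :=
  polyDim P + 1 - polyCodeg P

/-- Unimodular equivalence of lattice polytopes: an affine map carrying `P` onto `Q`,
with an affine inverse on affine hulls, such that both maps preserve lattice points of
the affine hulls. -/
def LatticeIso {d e : ℕ} (P : Set (Fin d → ℝ)) (Q : Set (Fin e → ℝ)) : Prop :=
  ∃ (f : (Fin d → ℝ) →ᵃ[ℝ] (Fin e → ℝ)) (g : (Fin e → ℝ) →ᵃ[ℝ] (Fin d → ℝ)),
    f '' P = Q ∧ g '' Q = P ∧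
    (∀ x ∈ affineSpan ℝ P, g (f x) = x) ∧ (∀ y ∈ affineSpan ℝ Q, f (g y) = y) ∧
    (∀ x ∈ affineSpan ℝ P, IsLatticePt x → IsLatticePt (f x)) ∧
    (∀ y ∈ affineSpan ℝ Q, IsLatticePt y → IsLatticePt (g y))

/-- The lattice pyramid `conv(P' × {0}, (0,1))` over `P' ⊆ ℝ^m`. -/
def pyramidOver {m : ℕ} (P' : Set (Fin m → ℝ)) : Set (Fin (m + 1) → ℝ) :=
  convexHull ℝ ((fun x => Fin.snoc x (0 : ℝ)) '' P' ∪ {Fin.snoc (0 : Fin m → ℝ) (1 : ℝ)})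

/-- `P` is a lattice pyramid if it is a single lattice point or is isomorphic to a
lattice pyramid over a lattice polytope. -/
def IsLatticePyramid {d : ℕ} (P : Set (Fin d → ℝ)) : Prop :=
  (∃ x : Fin d → ℝ, IsLatticePt x ∧ P = {x}) ∨
  ∃ (m : ℕ) (P' : Set (Fin m → ℝ)), IsLatticePolytope P' ∧ LatticeIso P (pyramidOver P')

/-- The Cayley polytope `P_1 * ⋯ * P_l ⊆ ℝ^{n+l}` of `P_1, …, P_l ⊆ ℝ^n`:
the convex hull of the sets `P_i × {e_i}`. -/
def cayley {n l : ℕ} (P : Fin l → Set (Fin n → ℝ)) : Set (Fin (n + l) → ℝ) :=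
  convexHull ℝ (⋃ i : Fin l, (fun x => Fin.append x (Pi.single i (1 : ℝ))) '' P i)

/-- The Cayley polytope `F * G ⊆ ℝ^{n+2}` of two polytopes `F, G ⊆ ℝ^n`. -/
def cayleyTwo {n : ℕ} (F G : Set (Fin n → ℝ)) : Set (Fin (n + 2) → ℝ) :=
  convexHull ℝ
    ((fun x => Fin.append x ![(1 : ℝ), 0]) '' F ∪ (fun x => Fin.append x ![(0 : ℝ), 1]) '' G)

/-- `P` is a Cayley join of `F` and `G` if `P ≅ F * G` and `dim F + dim G = dim P - 1`. -/
def IsCayleyJoin {d n : ℕ} (P : Set (Fin d → ℝ)) (F G : Set (Fin n → ℝ)) : Prop :=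
  LatticeIso P (cayleyTwo F G) ∧ polyDim F + polyDim G + 1 = polyDim P

/-- `P` is reducible with factors `F` and `G`: a Cayley join with
`codeg F + codeg G = codeg P`. -/
def IsReducibleWith {d n : ℕ} (P : Set (Fin d → ℝ)) (F G : Set (Fin n → ℝ)) : Prop :=
  IsCayleyJoin P F G ∧ polyCodeg F + polyCodeg G = polyCodeg P

/-- `P` is reducible: it is a single lattice point (by convention) or is reducible
with some factors `F` and `G` which are lattice polytopes. -/
def IsReducible {d : ℕ} (P : Set (Fin d → ℝ)) : Prop :=
  (∃ x : Fin d → ℝ, IsLatticePt x ∧ P = {x}) ∨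
  ∃ (n : ℕ) (F G : Set (Fin n → ℝ)), IsLatticePolytope F ∧ IsLatticePolytope G ∧
    IsReducibleWith P F G

/-- `P` is a Cayley polytope: a single lattice point, or isomorphic to a Cayley polytope
of `l > 1` lattice polytopes. -/
def IsCayleyPolytope {d : ℕ} (P : Set (Fin d → ℝ)) : Prop :=
  (∃ x : Fin d → ℝ, IsLatticePt x ∧ P = {x}) ∨
  ∃ (n l : ℕ) (Q : Fin l → Set (Fin n → ℝ)), 1 < l ∧ (∀ i, IsLatticePolytope (Q i)) ∧
    LatticeIso P (cayley Q)

/-- `P` is IDP if for every `k ≥ 2` every lattice point of `k • P` is a sum of `k`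
lattice points of `P`. -/
def IsIDP {d : ℕ} (P : Set (Fin d → ℝ)) : Prop :=
  ∀ k : ℕ, 2 ≤ k → ∀ x : Fin d → ℝ, IsLatticePt x → x ∈ (k : ℝ) • P →
    ∃ p : Fin k → (Fin d → ℝ), (∀ i, p i ∈ P ∧ IsLatticePt (p i)) ∧ x = ∑ i, p i

/-- The standard simplex `Δ_s = conv(0, e_1, …, e_s) ⊆ ℝ^s`. -/
def stdSimplexLP (s : ℕ) : Set (Fin s → ℝ) :=
  convexHull ℝ (insert 0 (Set.range fun i : Fin s => Pi.single i (1 : ℝ)))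

/-- The product of `F ⊆ ℝ^m` and `G ⊆ ℝ^n` inside `ℝ^{m+n}`. -/
def prodPoly {m n : ℕ} (F : Set (Fin m → ℝ)) (G : Set (Fin n → ℝ)) : Set (Fin (m + n) → ℝ) :=
  (fun p : (Fin m → ℝ) × (Fin n → ℝ) => Fin.append p.1 p.2) '' (F ×ˢ G)

/-- The free join `conv(F × 0 × {0} ∪ 0 × G × {1}) ⊆ ℝ^m × ℝ^n × ℝ`. -/
def freeJoin {m n : ℕ} (F : Set (Fin m → ℝ)) (G : Set (Fin n → ℝ)) :
    Set (Fin (m + n + 1) → ℝ) :=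
  convexHull ℝ
    ((fun x => Fin.snoc (Fin.append x (0 : Fin n → ℝ)) (0 : ℝ)) '' F ∪
     (fun y => Fin.snoc (Fin.append (0 : Fin m → ℝ) y) (1 : ℝ)) '' G)

theorem mem_ri_iff_metric {d : ℕ} {C : Set (Fin d → ℝ)} {x : Fin d → ℝ} :
    x ∈ intrinsicInterior ℝ C ↔ x ∈ affineSpan ℝ C ∧
      ∃ δ > 0, ∀ w ∈ affineSpan ℝ C, dist w x < δ → w ∈ C := by
  rw [mem_intrinsicInterior]
  constructor
  · rintro ⟨y, hy, rfl⟩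
    refine ⟨y.2, ?_⟩
    rw [mem_interior_iff_mem_nhds, Metric.mem_nhds_iff] at hy
    obtain ⟨δ, hδ, h⟩ := hy
    refine ⟨δ, hδ, fun w hw hd => ?_⟩
    exact h (show (⟨w, hw⟩ : affineSpan ℝ C) ∈ Metric.ball y δ from hd)
  · rintro ⟨hx, δ, hδ, h⟩
    refine ⟨⟨x, hx⟩, ?_, rfl⟩
    rw [mem_interior_iff_mem_nhds, Metric.mem_nhds_iff]
    exact ⟨δ, hδ, fun w hw => h w w.2 hw⟩

theorem mem_ri_iff {d : ℕ} {C : Set (Fin d → ℝ)} (hC : Convex ℝ C) {x : Fin d → ℝ} :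
    x ∈ intrinsicInterior ℝ C ↔ x ∈ C ∧ ∀ y ∈ C, ∃ ε > (0:ℝ), x + ε • (x - y) ∈ C := by
  constructor
  · intro hx
    refine ⟨intrinsicInterior_subset hx, fun y hy => ?_⟩
    obtain ⟨hx, δ, hδ, h⟩ := mem_ri_iff_metric.1 hx
    refine ⟨δ / (2 * (‖x - y‖ + 1)), by positivity, h _ ?_ ?_⟩
    · have := AffineMap.lineMap_mem (-(δ / (2 * (‖x - y‖ + 1)))) hx (subset_affineSpan ℝ C hy)
      rw [AffineMap.lineMap_apply] at this
      convert this using 1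
      simp only [vsub_eq_sub, vadd_eq_add]
      module
    · rw [dist_eq_norm, add_sub_cancel_left, norm_smul, Real.norm_of_nonneg (by positivity),
        div_mul_eq_mul_div, div_lt_iff₀ (by positivity)]
      nlinarith [norm_nonneg (x - y)]
  · rintro ⟨hx, h⟩
    obtain ⟨y, hy⟩ := (intrinsicInterior_nonempty hC).2 ⟨x, hx⟩
    obtain ⟨ε, hε, hz⟩ := h y (intrinsicInterior_subset hy)
    obtain ⟨hya, δ, hδ, hb⟩ := mem_ri_iff_metric.1 hy
    have hxa := subset_affineSpan ℝ C hx
    refine mem_ri_iff_metric.2 ⟨hxa, δ * (ε / (1 + ε)), by positivity, fun w hw hd => ?_⟩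
    have hy' : y + ((1 + ε) / ε) • (w - x) ∈ C := by
      apply hb
      · have := AffineSubspace.vadd_mem_of_mem_direction
          (Submodule.smul_mem _ ((1 + ε) / ε) (AffineSubspace.vsub_mem_direction hw hxa)) hya
        simp only [vsub_eq_sub, vadd_eq_add] at this
        rwa [add_comm] at this
      · rw [dist_eq_norm, add_sub_cancel_left, norm_smul, Real.norm_of_nonneg (by positivity),
          ← dist_eq_norm]
        calc _ < (1 + ε) / ε * (δ * (ε / (1 + ε))) := by gcongr
          _ = δ := by field_simp
    have := hC hy' hz (a := ε / (1 + ε)) (b := 1 / (1 + ε)) (by positivity) (by positivity)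
      (by field_simp; ring)
    convert this using 1
    ext i
    simp only [Pi.add_apply, Pi.smul_apply, Pi.sub_apply, smul_eq_mul]
    field_simp
    ring

def prY (n l : ℕ) : (Fin (n + l) → ℝ) →ₗ[ℝ] (Fin n → ℝ) := LinearMap.funLeft ℝ ℝ (Fin.castAdd l)
def prL (n l : ℕ) : (Fin (n + l) → ℝ) →ₗ[ℝ] (Fin l → ℝ) := LinearMap.funLeft ℝ ℝ (Fin.natAdd n)
def ap (n l : ℕ) : ((Fin n → ℝ) × (Fin l → ℝ)) →ₗ[ℝ] (Fin (n + l) → ℝ) where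
  toFun p := Fin.append p.1 p.2
  map_add' p q := by
    ext i; refine Fin.addCases (fun i => ?_) (fun i => ?_) i <;> simp
  map_smul' c q := by
    ext i; refine Fin.addCases (fun i => ?_) (fun i => ?_) i <;> simp

@[simp] theorem prY_ap {n l : ℕ} (y : Fin n → ℝ) (m : Fin l → ℝ) : prY n l (ap n l (y, m)) = y := by
  ext i; simp [prY, ap, LinearMap.funLeft]
@[simp] theorem prL_ap {n l : ℕ} (y : Fin n → ℝ) (m : Fin l → ℝ) : prL n l (ap n l (y, m)) = m := by
  ext i; simp [prL, ap, LinearMap.funLeft]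
@[simp] theorem ap_pr {n l : ℕ} (z) : ap n l (prY n l z, prL n l z) = z := by
  ext i; refine Fin.addCases (fun i => ?_) (fun i => ?_) i <;> simp [prL, prY, ap, LinearMap.funLeft]
theorem pr_ext {n l : ℕ} {z z' : Fin (n + l) → ℝ} (h : prY n l z = prY n l z')
    (h' : prL n l z = prL n l z') : z = z' := by
  rw [← ap_pr z, ← ap_pr z', h, h']

theorem lat_ap {n l : ℕ} {y : Fin n → ℝ} {m : Fin l → ℝ} (hy : IsLatticePt y) (hm : IsLatticePt m) :
    IsLatticePt (ap n l (y, m)) := by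
  intro i
  refine Fin.addCases (fun i => ?_) (fun i => ?_) i
  · simpa [ap] using hy i
  · simpa [ap] using hm i
theorem lat_prY {n l : ℕ} {z} (h : IsLatticePt z) : IsLatticePt (prY n l z) := fun i => h _
theorem lat_prL {n l : ℕ} {z} (h : IsLatticePt z) : IsLatticePt (prL n l z) := fun i => h _

/-- explicit description of `cayley`. -/
theorem mem_cayley {n l : ℕ} {A : Fin l → Set (Fin n → ℝ)} (hA : ∀ i, Convex ℝ (A i))
    (hne : ∀ i, (A i).Nonempty) {z : Fin (n + l) → ℝ} :
    z ∈ cayley A ↔ (∀ i, 0 ≤ prL n l z i) ∧ ∑ i, prL n l z i = 1 ∧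
      ∃ q : Fin l → Fin n → ℝ, (∀ i, q i ∈ A i) ∧ prY n l z = ∑ i, prL n l z i • q i := by
  constructor
  · intro hz
    suffices h : cayley A ⊆ {z | (∀ i, 0 ≤ prL n l z i) ∧ ∑ i, prL n l z i = 1 ∧
      ∃ q : Fin l → Fin n → ℝ, (∀ i, q i ∈ A i) ∧ prY n l z = ∑ i, prL n l z i • q i} from h hz
    refine convexHull_min ?_ ?_
    · rintro z hz
      obtain ⟨i, x, hx, rfl⟩ := Set.mem_iUnion.1 hz
      change (ap n l (x, Pi.single i 1)) ∈ _
      simp only [Set.mem_setOf_eq, prL_ap, prY_ap]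
      refine ⟨fun j => ?_, by simp, ?_⟩
      · by_cases h : j = i
        · subst h; simp
        · simp [h]
      · choose a ha using hne
        classical
        refine ⟨Function.update a i x, fun j => ?_, ?_⟩
        · by_cases h : j = i
          · subst h; simpa
          · simpa [h] using ha j
        · rw [Finset.sum_eq_single i]
          · simp
          · intro j _ h; simp [h]
          · simp
    · rintro z ⟨h1, h2, q, hq, h3⟩ z' ⟨h1', h2', q', hq', h3'⟩ a b ha hb hab
      have hs : ∀ i, 0 ≤ a * prL n l z i + b * prL n l z' i := fun i =>
        add_nonneg (mul_nonneg ha (h1 i)) (mul_nonneg hb (h1' i))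
      have key : ∀ i, ∃ r ∈ A i, (a * prL n l z i + b * prL n l z' i) • r =
          (a * prL n l z i) • q i + (b * prL n l z' i) • q' i := by
        intro i
        have := (hA i).add_smul (mul_nonneg ha (h1 i)) (mul_nonneg hb (h1' i))
        have h : (a * prL n l z i) • q i + (b * prL n l z' i) • q' i ∈
            (a * prL n l z i + b * prL n l z' i) • A i := by
          rw [this]
          exact Set.add_mem_add (Set.smul_mem_smul_set (hq i)) (Set.smul_mem_smul_set (hq' i))
        exact h
      choose r hr hr' using key
      refine ⟨fun i => ?_, ?_, r, hr, ?_⟩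
      · simpa using hs i
      · simp only [map_add, map_smul, Pi.add_apply, Pi.smul_apply, smul_eq_mul]
        rw [Finset.sum_add_distrib, ← Finset.mul_sum, ← Finset.mul_sum, h2, h2']; simpa
      · simp only [map_add, map_smul, Pi.add_apply, Pi.smul_apply, smul_eq_mul, hr']
        rw [Finset.sum_add_distrib, h3, h3', Finset.smul_sum, Finset.smul_sum]
        simp only [smul_smul]
  · rintro ⟨h1, h2, q, hq, h3⟩
    have : z = ∑ i, prL n l z i • ap n l (q i, Pi.single i 1) := by
      apply pr_ext
      · simp [h3]
      · ext j
        simp [Finset.sum_apply, Pi.single_apply]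
    rw [this]
    refine (convex_convexHull ℝ _).sum_mem (fun i _ => h1 i) h2 (fun i _ => ?_)
    exact subset_convexHull ℝ _ (Set.mem_iUnion.2 ⟨i, q i, hq i, rfl⟩)

theorem mem_lcayley {n l : ℕ} (hl : 0 < l) {A : Fin l → Set (Fin n → ℝ)} (hA : ∀ i, Convex ℝ (A i))
    (hne : ∀ i, (A i).Nonempty) {z : Fin (n + l) → ℝ} :
    z ∈ (l : ℝ) • cayley A ↔ (∀ i, 0 ≤ prL n l z i) ∧ ∑ i, prL n l z i = l ∧
      ∃ q : Fin l → Fin n → ℝ, (∀ i, q i ∈ A i) ∧ prY n l z = ∑ i, prL n l z i • q i := by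
  have hl' : (0:ℝ) < l := by exact_mod_cast hl
  rw [Set.mem_smul_set_iff_inv_smul_mem₀ hl'.ne', mem_cayley hA hne]
  simp only [map_smul, Pi.smul_apply, smul_eq_mul, ← Finset.mul_sum, mul_smul, ← Finset.smul_sum]
  refine and_congr (forall_congr' fun i => ?_) (and_congr ?_ ?_)
  · rw [mul_nonneg_iff_of_pos_left (by positivity)]
  · rw [inv_mul_eq_one₀ hl'.ne', eq_comm]
  · simp [hl'.ne']

theorem lcayley_single {n l : ℕ} (hl : 0 < l) {A : Fin l → Set (Fin n → ℝ)}
    (hA : ∀ i, Convex ℝ (A i))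
    (hne : ∀ i, (A i).Nonempty) {i : Fin l} {x} (hx : x ∈ A i) :
    ap n l ((l : ℝ) • x, Pi.single i (l : ℝ)) ∈ (l : ℝ) • cayley A := by
  refine ⟨ap n l (x, Pi.single i 1), subset_convexHull ℝ _ (Set.mem_iUnion.2 ⟨i, x, hx, rfl⟩), ?_⟩
  simp only [← map_smul, Prod.smul_mk, ← Pi.single_smul, smul_eq_mul, mul_one]

theorem mem_lcayley_one {n l : ℕ} (hl : 0 < l) {A : Fin l → Set (Fin n → ℝ)}
    (hA : ∀ i, Convex ℝ (A i))
    (hne : ∀ i, (A i).Nonempty) {x} :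
    ap n l (x, 1) ∈ (l : ℝ) • cayley A ↔ x ∈ ∑ i, A i := by
  rw [mem_lcayley hl hA hne, Set.mem_fintype_sum]
  simp only [prL_ap, prY_ap, Pi.one_apply, one_smul]
  constructor
  · rintro ⟨-, -, q, hq, h⟩
    exact ⟨q, hq, h.symm⟩
  · rintro ⟨q, hq, h⟩
    exact ⟨by simp, by simp, q, hq, h.symm⟩
theorem polyDim_lcayley {n l : ℕ} (hl : 0 < l) {A : Fin l → Set (Fin n → ℝ)}
    (hA : ∀ i, Convex ℝ (A i)) (hne : ∀ i, (A i).Nonempty) :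
    polyDim ((l : ℝ) • cayley A) + 1 = polyDim (∑ i, A i) + l := by
  classical
  have hl' : (0:ℝ) < l := by exact_mod_cast hl
  unfold polyDim
  rw [direction_affineSpan, direction_affineSpan]
  choose a ha using hne
  have hne : ∀ i, (A i).Nonempty := fun i => ⟨_, ha i⟩
  set D := vectorSpan ℝ (∑ i, A i) with hD
  let σ : (Fin l → ℝ) →ₗ[ℝ] ℝ := ∑ i, LinearMap.proj i
  have hσ : ∀ m, σ m = ∑ i, m i := fun m => by simp [σ]
  have hDa : ∀ i, ∀ q ∈ A i, q - a i ∈ D := by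
    intro i q hq
    have h1 : (∑ j, Function.update a i q j) ∈ ∑ i, A i := by
      rw [Set.mem_fintype_sum]
      refine ⟨_, fun j => ?_, rfl⟩
      by_cases h : j = i
      · subst h; simpa
      · simpa [h] using ha j
    have h2 : (∑ j, a j) ∈ ∑ i, A i := by
      rw [Set.mem_fintype_sum]
      exact ⟨_, ha, rfl⟩
    have := vsub_mem_vectorSpan ℝ h1 h2
    rw [vsub_eq_sub, ← Finset.sum_sub_distrib] at this
    have e : ∑ j, (Function.update a i q j - a j) = q - a i := by
      rw [Finset.sum_eq_single i]
      · simp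
      · intro j _ h; simp [h]
      · simp
    rwa [e] at this
  let Φ : (D × (LinearMap.ker σ)) →ₗ[ℝ] (Fin (n + l) → ℝ) :=
    (ap n l).comp ((D.subtype.comp (LinearMap.fst ℝ _ _) +
      (∑ i, (LinearMap.proj i).smulRight (a i)).comp ((LinearMap.ker σ).subtype.comp
        (LinearMap.snd ℝ _ _))).prod ((LinearMap.ker σ).subtype.comp (LinearMap.snd ℝ _ _)))
  have hΦ : ∀ d h, Φ (d, h) = ap n l (d.1 + ∑ i, h.1 i • a i, h.1) := by
    intro d h; simp [Φ]
  have hinj : Function.Injective Φ := by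
    rintro ⟨d, h⟩ ⟨d', h'⟩ e
    rw [hΦ, hΦ] at e
    have e1 := congrArg (prL n l) e
    have e2 := congrArg (prY n l) e
    simp only [prL_ap, prY_ap] at e1 e2
    have e3 : h = h' := Subtype.ext e1
    subst e3
    rw [add_left_inj] at e2
    rw [Subtype.ext e2]
  have hrange : vectorSpan ℝ ((l : ℝ) • cayley A) = LinearMap.range Φ := by
    apply le_antisymm
    · rw [vectorSpan, Submodule.span_le]
      rintro _ ⟨z, hz, z', hz', rfl⟩
      rw [mem_lcayley hl hA hne] at hz hz'
      obtain ⟨-, h2, q, hq, h3⟩ := hz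
      obtain ⟨-, h2', q', hq', h3'⟩ := hz'
      refine ⟨(⟨∑ i, prL n l z i • (q i - a i) - ∑ i, prL n l z' i • (q' i - a i), ?_⟩,
        ⟨prL n l (z - z'), ?_⟩), ?_⟩
      · exact D.sub_mem (D.sum_mem fun i _ => D.smul_mem _ (hDa i _ (hq i)))
          (D.sum_mem fun i _ => D.smul_mem _ (hDa i _ (hq' i)))
      · rw [LinearMap.mem_ker, map_sub, map_sub, hσ, hσ, h2, h2', sub_self]
      · rw [hΦ]
        apply pr_ext
        · simp only [prY_ap, vsub_eq_sub, map_sub, h3, h3', Pi.sub_apply, sub_smul, smul_sub,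
            Finset.sum_sub_distrib]
          abel
        · simp
    · set W := vectorSpan ℝ ((l : ℝ) • cayley A) with hW
      have e1 : ∀ i j, ∀ q ∈ A i, ∀ r ∈ A j, ap n l (q - r, Pi.single i 1 - Pi.single j 1) ∈ W := by
        intro i j q hq r hr
        have := W.smul_mem (l : ℝ)⁻¹ (vsub_mem_vectorSpan ℝ (lcayley_single hl hA hne hq)
          (lcayley_single hl hA hne hr))
        rw [vsub_eq_sub, ← map_sub, ← map_smul] at this
        convert this using 2
        ext k
        · simp [hl'.ne', ← mul_sub]
        · simp [Pi.single_apply, ← mul_sub]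
          rw [mul_sub]
          congr 1 <;> split_ifs <;> simp [hl'.ne']
      rintro _ ⟨⟨d, h⟩, rfl⟩
      have hd : ap n l (d.1, 0) ∈ W := by
        have : D ≤ W.comap ((ap n l).comp (LinearMap.inl ℝ _ _)) := by
          rw [hD, vectorSpan, Submodule.span_le]
          rintro _ ⟨x, hx, y, hy, rfl⟩
          rw [Set.mem_fintype_sum] at hx hy
          obtain ⟨q, hq, rfl⟩ := hx
          obtain ⟨r, hr, rfl⟩ := hy
          have := W.sum_mem (t := Finset.univ) fun i _ => e1 i i _ (hq i) _ (hr i)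
          rw [← map_sum] at this
          simp only [sub_self] at this
          change ap n l (_, 0) ∈ W
          convert this using 2
          ext k
          · simp [Prod.fst_sum]
          · simp [Prod.snd_sum]
        exact this d.2
      have hh : ap n l (∑ i, h.1 i • a i, h.1) ∈ W := by
        let o : Fin l := ⟨0, hl⟩
        have := W.sum_mem (t := Finset.univ) fun i _ =>
          W.smul_mem (h.1 i) (e1 i o _ (ha i) _ (ha o))
        simp only [← map_smul, ← map_sum] at this
        have hs : ∑ i, h.1 i = 0 := by rw [← hσ]; exact h.2
        convert this using 2
        apply Prod.ext
        · simp only [Prod.smul_mk, Prod.fst_sum, smul_sub, Finset.sum_sub_distrib,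
            ← Finset.sum_smul, hs]
          simp
        · simp only [Prod.smul_mk, Prod.snd_sum, smul_sub, Finset.sum_sub_distrib,
            ← Finset.sum_smul, hs]
          ext k
          simp [Finset.sum_apply, Pi.single_apply]
      rw [hΦ]
      have := W.add_mem hd hh
      rw [← map_add] at this
      simpa using this
  rw [hrange, LinearMap.finrank_range_of_inj hinj, Module.finrank_prod]
  have hr : Module.finrank ℝ (LinearMap.range σ) = 1 := by
    have : LinearMap.range σ = ⊤ := by
      rw [LinearMap.range_eq_top]
      intro t
      refine ⟨Pi.single ⟨0, hl⟩ t, ?_⟩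
      rw [hσ]; simp
    rw [this]; simp
  have := LinearMap.finrank_range_add_finrank_ker σ
  simp only [Module.finrank_fin_fun, hr] at this
  omega

theorem ri_fwd {n l : ℕ} (hl : 0 < l) {A : Fin l → Set (Fin n → ℝ)}
    (hA : ∀ i, Convex ℝ (A i)) (hne : ∀ i, (A i).Nonempty) {x : Fin n → ℝ} :
    ap n l (x, 1) ∈ intrinsicInterior ℝ ((l : ℝ) • cayley A) ↔
      x ∈ intrinsicInterior ℝ (∑ i, A i) := by
  have hl' : (0:ℝ) < l := by exact_mod_cast hl
  have hc : Convex ℝ ((l : ℝ) • cayley A) := (convex_convexHull ℝ _).smul _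
  have hc' : Convex ℝ (∑ i, A i) := by
    refine Finset.sum_induction _ (Convex ℝ) (fun _ _ => Convex.add) ?_ (fun i _ => hA i)
    exact convex_singleton 0
  rw [mem_ri_iff hc, mem_ri_iff hc', mem_lcayley_one hl hA hne]
  refine and_congr_right fun hx => ?_
  constructor
  · intro h y hy
    obtain ⟨ε, hε, h'⟩ := h (ap n l (y, 1)) ((mem_lcayley_one hl hA hne).2 hy)
    refine ⟨ε, hε, ?_⟩
    rw [← mem_lcayley_one hl hA hne]
    convert h' using 1
    rw [← map_sub, ← map_smul, ← map_add]
    simp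
  · intro h z hz
    obtain ⟨h1, h2, q, hq, h3⟩ := (mem_lcayley hl hA hne).1 hz
    obtain ⟨δ, hδ, h'⟩ := h (∑ i, q i) (Set.mem_fintype_sum _ _ |>.2 ⟨q, hq, rfl⟩)
    obtain ⟨p, hp, hpx⟩ := (Set.mem_fintype_sum _ _).1 h'
    have hle : ∀ i, prL n l z i ≤ l := fun i => by
      rw [← h2]; exact Finset.single_le_sum (fun j _ => h1 j) (Finset.mem_univ i)
    set ε := δ / (1 + δ) / l with hε
    have hε0 : 0 < ε := by positivity
    have hx' : x = ∑ i, ((1 / (1 + δ)) • p i + (δ / (1 + δ)) • q i) := by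
      rw [Finset.sum_add_distrib, ← Finset.smul_sum, ← Finset.smul_sum, hpx]
      ext k
      simp only [Pi.add_apply, Pi.smul_apply, Pi.sub_apply, smul_eq_mul]
      field_simp
      ring
    refine ⟨ε, hε0, ?_⟩
    have hco : ∀ i, 0 ≤ (1 + ε) * (δ / (1 + δ)) - ε * prL n l z i := fun i => by
      have : ε * prL n l z i ≤ ε * l := by gcongr; exact hle i
      have e : ε * l = δ / (1 + δ) := by rw [hε]; field_simp
      have : 0 ≤ ε * (δ / (1 + δ)) := by positivity
      linarith
    have key : ∀ i, ∃ r ∈ A i, (1 + ε * (1 - prL n l z i)) • r =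
        ((1 + ε) * (1 / (1 + δ))) • p i + ((1 + ε) * (δ / (1 + δ)) - ε * prL n l z i) • q i := by
      intro i
      have hp0 : 0 ≤ ((1 + ε) * (1 / (1 + δ))) := by positivity
      have e : 1 + ε * (1 - prL n l z i) =
          ((1 + ε) * (1 / (1 + δ))) + ((1 + ε) * (δ / (1 + δ)) - ε * prL n l z i) := by
        have : 1 / (1 + δ) + δ / (1 + δ) = 1 := by field_simp
        linear_combination -(1 + ε) * this
      have h : ((1 + ε) * (1 / (1 + δ))) • p i + ((1 + ε) * (δ / (1 + δ)) - ε * prL n l z i) • q i ∈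
          (1 + ε * (1 - prL n l z i)) • A i := by
        rw [e, (hA i).add_smul hp0 (hco i)]
        exact Set.add_mem_add (Set.smul_mem_smul_set (hp i)) (Set.smul_mem_smul_set (hq i))
      exact h
    choose r hr hr' using key
    rw [mem_lcayley hl hA hne]
    simp only [map_add, map_smul, map_sub, prL_ap, prY_ap, Pi.add_apply, Pi.smul_apply,
      Pi.sub_apply, Pi.one_apply, smul_eq_mul]
    refine ⟨fun i => ?_, ?_, r, hr, ?_⟩
    · have : 0 ≤ ((1 + ε) * (1 / (1 + δ))) := by positivity
      have h5 : 1 / (1 + δ) + δ / (1 + δ) = 1 := by field_simp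
      have h6 := hco i
      nlinarith
    · rw [Finset.sum_add_distrib, ← Finset.mul_sum, Finset.sum_sub_distrib, h2]; simp
    · simp only [hr', h3]
      rw [hx']
      simp only [← Finset.sum_sub_distrib, Finset.smul_sum, ← Finset.sum_add_distrib]
      refine Finset.sum_congr rfl fun i _ => ?_
      module

theorem ri_pos {n l : ℕ} (hl : 0 < l) {A : Fin l → Set (Fin n → ℝ)}
    (hA : ∀ i, Convex ℝ (A i)) (hne : ∀ i, (A i).Nonempty) {z : Fin (n + l) → ℝ}
    (hz : z ∈ intrinsicInterior ℝ ((l : ℝ) • cayley A)) (hlat : IsLatticePt z) :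
    prL n l z = 1 := by
  have hl' : (0:ℝ) < l := by exact_mod_cast hl
  have hc : Convex ℝ ((l : ℝ) • cayley A) := (convex_convexHull ℝ _).smul _
  rw [mem_ri_iff hc] at hz
  obtain ⟨hz, h⟩ := hz
  have h2 := ((mem_lcayley hl hA hne).1 hz).2.1
  have hge : ∀ i, 1 ≤ prL n l z i := by
    intro i
    obtain ⟨x, hx⟩ := hne i
    obtain ⟨ε, hε, h'⟩ := h _ (lcayley_single hl hA hne hx)
    have := ((mem_lcayley hl hA hne).1 h').1 i
    simp only [map_add, map_smul, map_sub, prL_ap, Pi.add_apply, Pi.smul_apply, Pi.sub_apply,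
      Pi.single_eq_same, smul_eq_mul] at this
    have hpos : 0 < prL n l z i := by
      by_contra hcon
      push Not at hcon
      nlinarith [mul_pos hε hl', mul_nonneg hε.le (neg_nonneg.2 hcon)]
    obtain ⟨m, hm⟩ := lat_prL hlat i
    rw [hm] at hpos ⊢
    have : 0 < m := by exact_mod_cast hpos
    exact_mod_cast this
  have hs : ∑ i, (prL n l z i - 1) = 0 := by
    rw [Finset.sum_sub_distrib, h2]; simp
  rw [Finset.sum_eq_zero_iff_of_nonneg (fun i _ => sub_nonneg.2 (hge i))] at hs
  ext i
  have := hs i (Finset.mem_univ i)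
  simp only [Pi.one_apply]; linarith

theorem face_sum {n l : ℕ} {A : Fin l → Set (Fin n → ℝ)} (v : (Fin n → ℝ) →ₗ[ℝ] ℝ) (h : Fin l → ℝ)
    (hle : ∀ i, ∀ q ∈ A i, v q ≤ h i) (hF : ∀ i, ∃ p ∈ A i, v p = h i) :
    {x ∈ ∑ i, A i | ∀ y ∈ ∑ i, A i, v y ≤ v x} = ∑ i, {p ∈ A i | v p = h i} := by
  choose p hp hp' using hF
  have hmax : ∀ y ∈ ∑ i, A i, v y ≤ ∑ i, h i := by
    intro y hy
    obtain ⟨q, hq, rfl⟩ := (Set.mem_fintype_sum _ _).1 hy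
    rw [map_sum]
    exact Finset.sum_le_sum fun i _ => hle i _ (hq i)
  ext x
  constructor
  · rintro ⟨hx, hm⟩
    obtain ⟨q, hq, rfl⟩ := (Set.mem_fintype_sum _ _).1 hx
    refine (Set.mem_fintype_sum _ _).2 ⟨q, fun i => ⟨hq i, ?_⟩, rfl⟩
    have h1 := hm _ ((Set.mem_fintype_sum _ _).2 ⟨p, hp, rfl⟩)
    simp only [map_sum, hp'] at h1
    have h0 : ∑ i, (h i - v (q i)) = 0 := by
      apply le_antisymm
      · rw [Finset.sum_sub_distrib]; linarith
      · exact Finset.sum_nonneg fun i _ => sub_nonneg.2 (hle i _ (hq i))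
    rw [Finset.sum_eq_zero_iff_of_nonneg (fun i _ => sub_nonneg.2 (hle i _ (hq i)))] at h0
    have := h0 i (Finset.mem_univ i)
    linarith
  · intro hx
    obtain ⟨q, hq, rfl⟩ := (Set.mem_fintype_sum _ _).1 hx
    refine ⟨(Set.mem_fintype_sum _ _).2 ⟨q, fun i => (hq i).1, rfl⟩, fun y hy => ?_⟩
    refine (hmax y hy).trans (le_of_eq ?_)
    rw [map_sum]
    exact Finset.sum_congr rfl fun i _ => (hq i).2.symm

theorem face_cay {n l : ℕ} (hl : 0 < l) {A : Fin l → Set (Fin n → ℝ)}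
    (hA : ∀ i, Convex ℝ (A i)) (v : (Fin n → ℝ) →ₗ[ℝ] ℝ) (h : Fin l → ℝ)
    (hle : ∀ i, ∀ q ∈ A i, v q ≤ h i) (hF : ∀ i, ∃ p ∈ A i, v p = h i)
    (w : (Fin (n + l) → ℝ) → ℝ) (c : ℝ) (hw : ∀ z ∈ (l : ℝ) • cayley A,
      w z = v (prY n l z) - ∑ i, prL n l z i * h i + c) :
    {z ∈ (l : ℝ) • cayley A | ∀ y ∈ (l : ℝ) • cayley A, w y ≤ w z} =
      (l : ℝ) • cayley (fun i => {p ∈ A i | v p = h i}) := by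
  have hne : ∀ i, (A i).Nonempty := fun i => let ⟨p, hp, _⟩ := hF i; ⟨p, hp⟩
  have hne' : ∀ i, ({p ∈ A i | v p = h i}).Nonempty := hF
  have hA' : ∀ i, Convex ℝ {p ∈ A i | v p = h i} := fun i =>
    (hA i).inter (convex_hyperplane v.isLinear (h i))
  have hval : ∀ z (q : Fin l → Fin n → ℝ), prY n l z = ∑ i, prL n l z i • q i →
      v (prY n l z) - ∑ i, prL n l z i * h i = - ∑ i, prL n l z i * (h i - v (q i)) := by
    intro z q hz
    rw [hz]
    simp only [map_sum, map_smul, smul_eq_mul, mul_sub, Finset.sum_sub_distrib]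
    ring
  have hmax : ∀ z ∈ (l : ℝ) • cayley A, w z ≤ c := by
    intro z hz
    rw [hw z hz]
    obtain ⟨h1, h2, q, hq, h3⟩ := (mem_lcayley hl hA hne).1 hz
    rw [hval z q h3]
    have := Finset.sum_nonneg (s := Finset.univ) fun i _ =>
      mul_nonneg (h1 i) (sub_nonneg.2 (hle i _ (hq i)))
    linarith
  have hface : ∀ z ∈ (l : ℝ) • cayley (fun i => {p ∈ A i | v p = h i}),
      z ∈ (l : ℝ) • cayley A ∧ w z = c := by
    intro z hz
    obtain ⟨h1, h2, q, hq, h3⟩ := (mem_lcayley hl hA' hne').1 hz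
    have hz' : z ∈ (l : ℝ) • cayley A :=
      (mem_lcayley hl hA hne).2 ⟨h1, h2, q, fun i => (hq i).1, h3⟩
    refine ⟨hz', ?_⟩
    rw [hw z hz', hval z q h3]
    simp [fun i => (hq i).2]
  ext z
  constructor
  · rintro ⟨hz, hm⟩
    choose p hp using hF
    have h0 := hface _ (lcayley_single hl hA' hne' (i := ⟨0, hl⟩) (hp _))
    have h00 := hm _ h0.1
    rw [h0.2, hw z hz] at h00
    obtain ⟨h1, h2, q, hq, h3⟩ := (mem_lcayley hl hA hne).1 hz
    rw [hval z q h3] at h00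
    have hnn : ∀ i ∈ Finset.univ, 0 ≤ prL n l z i * (h i - v (q i)) := fun i _ =>
      mul_nonneg (h1 i) (sub_nonneg.2 (hle i _ (hq i)))
    have hs : ∑ i, prL n l z i * (h i - v (q i)) = 0 :=
      le_antisymm (by linarith) (Finset.sum_nonneg hnn)
    rw [Finset.sum_eq_zero_iff_of_nonneg hnn] at hs
    classical
    refine (mem_lcayley hl hA' hne').2 ⟨h1, h2, fun i => if prL n l z i = 0 then p i else q i,
      fun i => ?_, ?_⟩
    · by_cases e : prL n l z i = 0
      · simpa [e] using hp i
      · have := hs i (Finset.mem_univ i)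
        rw [mul_eq_zero, or_iff_right e, sub_eq_zero] at this
        simpa [e] using ⟨hq i, this.symm⟩
    · rw [h3]
      refine Finset.sum_congr rfl fun i _ => ?_
      by_cases e : prL n l z i = 0 <;> simp [e]
  · intro hz
    obtain ⟨a, b⟩ := hface z hz
    exact ⟨a, fun y hy => b ▸ hmax y hy⟩

/-- The Cayley polytope `P_1 * ⋯ * P_l` of lattice polytopes in `ℝ^n` whose Minkowski sum
is `n`-dimensional is a Gorenstein polytope of codegree `l` iff `P_1 + ⋯ + P_l` is
reflexive. -/
theorem stmt11 {n l : ℕ} (hl : 0 < l) (P : Fin l → Set (Fin n → ℝ))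
    (hP : ∀ i, IsLatticePolytope (P i)) (hdim : polyDim (∑ i, P i) = n) :
    IsGorensteinOfCodeg (cayley P) l ↔ IsReflexivePolytope (∑ i, P i) := by
  classical
  have hl' : (0:ℝ) < l := by exact_mod_cast hl
  choose V hVne hVlat hPV using hP
  have hA : ∀ i, Convex ℝ (P i) := fun i => by rw [hPV]; exact convex_convexHull ℝ _
  have hne : ∀ i, (P i).Nonempty := fun i => by
    rw [hPV, convexHull_nonempty_iff]; exact_mod_cast hVne i
  have hA' : ∀ (v : (Fin n → ℝ) →ₗ[ℝ] ℝ) (h : Fin l → ℝ) i, Convex ℝ {p ∈ P i | v p = h i} :=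
    fun v h i => (hA i).inter (convex_hyperplane v.isLinear (h i))
  have hdP := polyDim_lcayley hl hA hne
  constructor
  · rintro ⟨-, z, hz, hlat, hfac⟩
    have hz1 := ri_pos hl hA hne hz hlat
    have hzx : z = ap n l (prY n l z, 1) := by rw [← hz1, ap_pr]
    refine ⟨prY n l z, ?_, lat_prY hlat, ?_⟩
    · rw [← ri_fwd hl hA hne, ← hzx]; exact hz
    rintro F ⟨hexp, hFne, hFd⟩
    obtain ⟨v, hv⟩ := hexp hFne
    obtain ⟨f, hf⟩ := hFne
    have hf' := hf
    rw [hv] at hf'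
    obtain ⟨hfM, hfmax⟩ := hf'
    obtain ⟨p, hp, hpf⟩ := (Set.mem_fintype_sum _ _).1 hfM
    have hle : ∀ i, ∀ q ∈ P i, v q ≤ v (p i) := by
      intro i q hq
      have h1 : (∑ j, Function.update p i q j) ∈ ∑ i, P i := by
        rw [Set.mem_fintype_sum]
        refine ⟨_, fun j => ?_, rfl⟩
        by_cases h : j = i
        · subst h; simpa
        · simpa [h] using hp j
      have h2 := hfmax _ h1
      rw [← hpf] at h2
      have e : ∑ j, Function.update p i q j - ∑ j, p j = q - p i := by
        rw [← Finset.sum_sub_distrib, Finset.sum_eq_single i]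
        · simp
        · intro j _ h; simp [h]
        · simp
      have e' := congrArg v e
      rw [map_sub, map_sub] at e'
      linarith
    have hFe : ∀ i, ∃ q ∈ P i, v.toLinearMap q = v (p i) := fun i => ⟨p i, hp i, rfl⟩
    have hFs := face_sum (A := P) v.toLinearMap (fun i => v (p i)) hle hFe
    let w : (Fin (n + l) → ℝ) →ₗ[ℝ] ℝ := v.toLinearMap.comp (prY n l) -
      (∑ i, v (p i) • LinearMap.proj i).comp (prL n l)
    have hw : ∀ z ∈ (l : ℝ) • cayley P, w z = v.toLinearMap (prY n l z) -
        ∑ i, prL n l z i * v (p i) + 0 := by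
      intro z _
      simp [w, mul_comm]
    have hG := face_cay hl hA v.toLinearMap (fun i => v (p i)) hle hFe w 0 hw
    have hF2 : F = ∑ i, {q ∈ P i | v.toLinearMap q = v (p i)} := by rw [hv, ← hFs]; rfl
    set Fi : Fin l → Set (Fin n → ℝ) := fun i => {q ∈ P i | v.toLinearMap q = v (p i)} with hFi
    have hAF : ∀ i, Convex ℝ (Fi i) := hA' v.toLinearMap (fun i => v (p i))
    have hdF := polyDim_lcayley hl hAF hFe
    obtain ⟨u, hu, hu'⟩ := hfac ((l : ℝ) • cayley Fi) ⟨fun _ => ⟨w.toContinuousLinearMap, hG.symm⟩,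
      ⟨_, (mem_lcayley_one hl hAF hFe).2 (hF2 ▸ hf)⟩, by rw [← hF2] at hdF; omega⟩
    let T : (Fin n → ℝ) →ᵃ[ℝ] (Fin (n + l) → ℝ) :=
      ((ap n l).comp (LinearMap.inl ℝ _ _)).toAffineMap + AffineMap.const ℝ _ (ap n l (0, 1))
    have hT : ∀ y, T y = ap n l (y, 1) := by
      intro y
      simp [T, ← map_add]
    refine ⟨u.comp T, ?_, ?_⟩
    · intro y hy hylat
      rw [AffineMap.comp_apply]
      apply hu
      · have h1 : T y ∈ (affineSpan ℝ (∑ i, P i)).map T := AffineSubspace.mem_map_of_mem T hy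
        rw [AffineSubspace.map_span] at h1
        refine affineSpan_mono ℝ ?_ h1
        rintro _ ⟨x, hx, rfl⟩
        rw [hT]
        exact (mem_lcayley_one hl hA hne).2 hx
      · rw [hT]
        exact lat_ap hylat fun i => ⟨1, by simp⟩
    · intro g hg
      rw [AffineMap.comp_apply, AffineMap.comp_apply, hT, hT, ← hzx]
      exact hu' _ ((mem_lcayley_one hl hAF hFe).2 (hF2 ▸ hg))
  · rintro ⟨x, hx, hxlat, hfac⟩
    refine ⟨hl, ap n l (x, 1), (ri_fwd hl hA hne).2 hx, lat_ap hxlat fun i => ⟨1, by simp⟩, ?_⟩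
    rintro G ⟨hexp, hGne, hGd⟩
    obtain ⟨w, hw⟩ := hexp hGne
    obtain ⟨g, hg⟩ := hGne
    have hg' := hg
    rw [hw] at hg'
    obtain ⟨hgQ, hgmax⟩ := hg'
    let v : (Fin n → ℝ) →ₗ[ℝ] ℝ := w.toLinearMap.comp ((ap n l).comp (LinearMap.inl ℝ _ _))
    let c : Fin l → ℝ := fun i => w (ap n l (0, Pi.single i 1))
    have hwz : ∀ z, w z = v (prY n l z) + ∑ i, prL n l z i * c i := by
      intro z
      have : z = ap n l (prY n l z, 0) + ∑ i, prL n l z i • ap n l (0, Pi.single i 1) := by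
        apply pr_ext
        · simp
        · ext j
          simp [Finset.sum_apply, Pi.single_apply]
      conv_lhs => rw [this]
      simp [v, c]
    let b : ℝ := w g / l
    have hle : ∀ i, ∀ q ∈ P i, v q ≤ b - c i := by
      intro i q hq
      have := hgmax _ (lcayley_single hl hA hne hq)
      rw [hwz] at this
      have e : ∑ j, (Pi.single i (l:ℝ) : Fin l → ℝ) j * c j = l * c i := by
        rw [Finset.sum_eq_single i]
        · simp
        · intro j _ h; simp [h]
        · simp
      simp only [prY_ap, prL_ap, e, map_smul, smul_eq_mul] at this
      have : v q + c i ≤ b := by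
        rw [le_div_iff₀ hl']; linarith
      linarith
    have hwz' : ∀ z ∈ (l : ℝ) • cayley P, w z =
        v (prY n l z) - ∑ i, prL n l z i * (b - c i) + w g := by
      intro z hz
      have h2 := ((mem_lcayley hl hA hne).1 hz).2.1
      rw [hwz z]
      simp only [mul_sub, Finset.sum_sub_distrib, ← Finset.sum_mul, h2, b]
      field_simp
      ring
    by_cases hF : ∀ i, ∃ p ∈ P i, v p = b - c i
    · have hFs := face_sum (A := P) v (fun i => b - c i) hle hF
      have hG := face_cay hl hA v (fun i => b - c i) hle hF w (w g) hwz'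
      have hG2 : G = (l : ℝ) • cayley fun i => {q ∈ P i | v q = b - c i} := by rw [hw, ← hG]
      set Fi : Fin l → Set (Fin n → ℝ) := fun i => {q ∈ P i | v q = b - c i} with hFi
      have hAF : ∀ i, Convex ℝ (Fi i) := hA' v (fun i => b - c i)
      have hdF := polyDim_lcayley hl hAF hF
      have hVF : ∀ i, ∃ p ∈ Fi i, IsLatticePt p := by
        intro i
        by_contra hcon
        push Not at hcon
        have hsub : P i ⊆ {q | v q < b - c i} := by
          rw [hPV]
          refine convexHull_min (fun q hq => ?_) (convex_halfSpace_lt v.isLinear _)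
          have hqP : q ∈ P i := by rw [hPV]; exact subset_convexHull ℝ _ hq
          refine lt_of_le_of_ne (hle i q hqP) fun e => ?_
          exact hcon q ⟨hqP, e⟩ (hVlat i q hq)
        obtain ⟨p, hp, hp'⟩ := hF i
        exact (hsub hp).ne hp'
      choose p hp hplat using hVF
      have hpF : ∑ i, p i ∈ ∑ i, Fi i := (Set.mem_fintype_sum _ _).2 ⟨p, hp, rfl⟩
      obtain ⟨u, hu, hu'⟩ := hfac (∑ i, Fi i) ⟨fun _ => ⟨v.toContinuousLinearMap, hFs.symm⟩,
        ⟨_, hpF⟩, by rw [← hG2] at hdF; omega⟩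
      have htop : affineSpan ℝ (∑ i, P i) = ⊤ := by
        rw [← AffineSubspace.direction_eq_top_iff_of_nonempty]
        · apply Submodule.eq_top_of_finrank_eq
          rw [Module.finrank_fin_fun]; exact hdim
        · exact ⟨x, subset_affineSpan ℝ _ (intrinsicInterior_subset hx)⟩
      have hulin : ∀ y, u y = u.linear y + u 0 := fun y => by
        have := u.map_vadd 0 y
        simpa using this
      have hint : ∀ y, IsLatticePt y → ∃ m : ℤ, u.linear y = m := by
        intro y hy
        obtain ⟨m, hm⟩ := hu y (htop ▸ AffineSubspace.mem_top ℝ _ y) hy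
        obtain ⟨k, hk⟩ := hu 0 (htop ▸ AffineSubspace.mem_top ℝ _ 0) (fun i => ⟨0, by simp⟩)
        refine ⟨m - k, ?_⟩
        have := hulin y
        push_cast
        linarith
      have hconst : ∀ i, ∀ q ∈ Fi i, u.linear q = u.linear (p i) := by
        intro i q hq
        have h1 : (∑ j, Function.update p i q j) ∈ ∑ i, Fi i := by
          rw [Set.mem_fintype_sum]
          refine ⟨_, fun j => ?_, rfl⟩
          by_cases h : j = i
          · subst h; simpa
          · simpa [h] using hp j
        have e : ∑ j, Function.update p i q j - ∑ j, p j = q - p i := by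
          rw [← Finset.sum_sub_distrib, Finset.sum_eq_single i]
          · simp
          · intro j _ h; simp [h]
          · simp
        have e' := congrArg u.linear e
        rw [map_sub, map_sub] at e'
        have e1 := hu' _ h1
        have e2 := hu' _ hpF
        rw [hulin] at e1 e2
        linarith
      let U : (Fin (n + l) → ℝ) →ₗ[ℝ] ℝ := u.linear.comp (prY n l) -
        (∑ i, u.linear (p i) • LinearMap.proj i).comp (prL n l)
      have hU : ∀ z, U z = u.linear (prY n l z) - ∑ i, u.linear (p i) * prL n l z i := by
        intro z
        simp [U]
      refine ⟨U.toAffineMap, ?_, ?_⟩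
      · intro y _ hy
        rw [LinearMap.coe_toAffineMap, hU]
        obtain ⟨m, hm⟩ := hint _ (lat_prY hy)
        choose k hk using fun i => hint _ (hplat i)
        choose j hj using lat_prL hy
        refine ⟨m - ∑ i, k i * j i, ?_⟩
        push_cast
        simp only [hm, hk, hj]
      · intro z hz
        rw [hG2, mem_lcayley hl hAF hF] at hz
        obtain ⟨h1, h2, q, hq, h3⟩ := hz
        rw [LinearMap.coe_toAffineMap, hU, hU]
        simp only [prY_ap, prL_ap, Pi.one_apply, mul_one]
        rw [h3]
        simp only [map_sum, map_smul, smul_eq_mul, fun i => hconst i _ (hq i)]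
        have e2 := hu' _ hpF
        rw [hulin, hulin x, map_sum] at e2
        have : ∑ i, prL n l z i * u.linear (p i) = ∑ i, u.linear (p i) * prL n l z i :=
          Finset.sum_congr rfl fun i _ => mul_comm _ _
        linarith
    · push Not at hF
      obtain ⟨i, hi⟩ := hF
      have hzero : ∀ z ∈ G, prL n l z i = 0 := by
        intro z hz
        rw [hw] at hz
        have hwe : w z = w g := le_antisymm (hgmax z hz.1) (hz.2 g hgQ)
        rw [hwz' z hz.1] at hwe
        obtain ⟨h1, h2, q, hq, h3⟩ := (mem_lcayley hl hA hne).1 hz.1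
        have hnn : ∀ i ∈ Finset.univ, 0 ≤ prL n l z i * (b - c i - v (q i)) := fun i _ =>
          mul_nonneg (h1 i) (sub_nonneg.2 (hle i _ (hq i)))
        have hs : ∑ i, prL n l z i * (b - c i - v (q i)) = 0 := by
          rw [h3] at hwe
          simp only [map_sum, map_smul, smul_eq_mul] at hwe
          simp only [mul_sub _ (b - _), Finset.sum_sub_distrib]
          linarith
        rw [Finset.sum_eq_zero_iff_of_nonneg hnn] at hs
        have := hs i (Finset.mem_univ i)
        rcases mul_eq_zero.1 this with h | h
        · exact h
        · exact absurd (by linarith) (hi _ (hq i))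
      let U : (Fin (n + l) → ℝ) →ₗ[ℝ] ℝ := -(LinearMap.proj i).comp (prL n l)
      have hU : ∀ z, U z = - prL n l z i := fun z => by simp [U]
      refine ⟨U.toAffineMap, ?_, ?_⟩
      · intro y _ hy
        obtain ⟨m, hm⟩ := lat_prL hy i
        exact ⟨-m, by rw [LinearMap.coe_toAffineMap, hU, hm]; push_cast; rfl⟩
      · intro z hz
        rw [LinearMap.coe_toAffineMap, hU, hU, hzero z hz]
        simp
end

section
/- Let P be a Gorenstein polytope that is reducible with factors F and G. If F is a lattice pyramid, then P is a lattice pyramid. -/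
open Pointwise

theorem aux_polyDim {d : ℕ} (P : Set (Fin d → ℝ)) :
    polyDim P = Module.finrank ℝ (vectorSpan ℝ P) := by
  rw [polyDim, direction_affineSpan]

theorem aux_extend_beyond {d : ℕ} {Q : Set (Fin d → ℝ)} {z q : Fin d → ℝ}
    (hz : z ∈ intrinsicInterior ℝ Q) (hq : q ∈ affineSpan ℝ Q) :
    ∃ s : ℝ, 0 < s ∧ z + s • (z - q) ∈ Q := by
  obtain ⟨y, hy, rfl⟩ := mem_intrinsicInterior.1 hz
  let φ : ℝ → affineSpan ℝ Q := fun t => ⟨AffineMap.lineMap (y : Fin d → ℝ) q t,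
    AffineMap.lineMap_mem t y.2 hq⟩
  have hφ : Continuous φ := by
    apply Continuous.subtype_mk
    exact AffineMap.lineMap_continuous
  have h0 : φ 0 = y := by ext; simp [φ]
  have hn : φ ⁻¹' (interior ((↑) ⁻¹' Q)) ∈ nhds (0:ℝ) :=
    hφ.continuousAt.preimage_mem_nhds (by rw [h0]; exact isOpen_interior.mem_nhds hy)
  obtain ⟨ε, hε, hb⟩ := Metric.mem_nhds_iff.1 hn
  refine ⟨ε/2, by positivity, ?_⟩
  have : (-(ε/2)) ∈ Metric.ball (0:ℝ) ε := by
    rw [Metric.mem_ball, dist_zero_right, norm_neg, Real.norm_of_nonneg (by positivity)]; linarith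
  have h1 := interior_subset (hb this)
  simp only [φ, Set.mem_preimage, AffineMap.lineMap_apply_module] at h1
  convert h1 using 1
  module

theorem aux_ri_of_support {d : ℕ} {Q : Set (Fin d → ℝ)} (hQ : Convex ℝ Q) {z : Fin d → ℝ}
    (hz : z ∈ Q)
    (h : ∀ l : (Fin d → ℝ) →ₗ[ℝ] ℝ, (∀ q ∈ Q, l q ≤ l z) → ∀ q ∈ Q, l q = l z) :
    z ∈ intrinsicInterior ℝ Q := by
  have hzA : z ∈ affineSpan ℝ Q := subset_affineSpan ℝ Q hz
  let D := (affineSpan ℝ Q).direction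
  let C : Set D := {x | (x : Fin d → ℝ) + z ∈ Q}
  let j : D → affineSpan ℝ Q := fun x => ⟨(x : Fin d → ℝ) + z,
    AffineSubspace.vadd_mem_of_mem_direction x.2 hzA⟩
  let k : affineSpan ℝ Q → D := fun a => ⟨(a : Fin d → ℝ) - z,
    AffineSubspace.vsub_mem_direction a.2 hzA⟩
  have hj : Continuous j := Continuous.subtype_mk (by fun_prop) _
  have hk : Continuous k := Continuous.subtype_mk (by fun_prop) _
  have hC : Convex ℝ C := by
    intro x hx y hy a b ha hb hab
    have := hQ hx hy ha hb hab
    simp only [C, Set.mem_ofPred_eq, Submodule.coe_add, Submodule.coe_smul]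
    convert this using 1
    have : b = 1 - a := by linarith
    subst this
    module
  obtain ⟨z0, hz0⟩ := Set.Nonempty.intrinsicInterior hQ ⟨z, hz⟩
  obtain ⟨y, hy, hy0⟩ := mem_intrinsicInterior.1 hz0
  have hne : k y ∈ interior C := by
    rw [mem_interior]
    refine ⟨j ⁻¹' (interior ((↑) ⁻¹' Q)), ?_, isOpen_interior.preimage hj, ?_⟩
    · intro x hx
      have hx' : j x ∈ interior ((↑) ⁻¹' Q) := hx
      have h3 := interior_subset hx'
      exact h3
    · have : j (k y) = y := by ext; simp [j, k]
      rw [Set.mem_preimage, this]; exact hy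
  by_cases h0 : (0 : D) ∈ interior C
  · rw [mem_intrinsicInterior]
    refine ⟨⟨z, hzA⟩, ?_, rfl⟩
    rw [mem_interior]
    refine ⟨k ⁻¹' (interior C), ?_, isOpen_interior.preimage hk, ?_⟩
    · intro x hx
      have := interior_subset hx
      simpa [C, k] using this
    · have : k ⟨z, hzA⟩ = 0 := by ext; simp [k]
      rw [Set.mem_preimage, this]; exact h0
  · exfalso
    obtain ⟨f, hf⟩ := geometric_hahn_banach_open_point hC.interior isOpen_interior h0
    obtain ⟨l, hl⟩ := LinearMap.exists_extend (f : D →ₗ[ℝ] ℝ)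
    have hl' : ∀ x : D, l x = f x := fun x => by
      have := congrArg (fun g => g x) hl
      simpa using this
    have hle : ∀ x ∈ C, f x ≤ 0 := by
      intro x hx
      have hx' : x ∈ closure (interior C) := by
        rw [hC.closure_interior_eq_closure_of_nonempty_interior ⟨_, hne⟩]
        exact subset_closure hx
      have hcl : IsClosed {x : D | f x ≤ 0} := isClosed_le f.continuous continuous_const
      exact closure_minimal (fun w hw => by simpa using (hf w hw).le) hcl hx'
    have hk' : ∀ a : affineSpan ℝ Q, l a = l z + f (k a) := by
      intro a
      rw [← hl' (k a)]
      simp [k]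
    have h1 := h l (fun q hq => by
      have hqA := subset_affineSpan ℝ Q hq
      rw [hk' ⟨q, hqA⟩]
      have := hle (k ⟨q, hqA⟩) (by simpa [C, k] using hq)
      linarith) z0 (intrinsicInterior_subset hz0)
    have h2 := hf _ hne
    rw [← hy0, hk' y] at h1
    simp at h2
    linarith

theorem aux_support_of_ri {d : ℕ} {Q : Set (Fin d → ℝ)} {z : Fin d → ℝ}
    (hz : z ∈ intrinsicInterior ℝ Q) (l : (Fin d → ℝ) →ₗ[ℝ] ℝ) (h : ∀ q ∈ Q, l q ≤ l z) :
    ∀ q ∈ Q, l q = l z := by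
  intro q hq
  obtain ⟨s, hs, h1⟩ := aux_extend_beyond hz (subset_affineSpan ℝ Q hq)
  have h2 := h _ h1
  have h3 := h _ hq
  simp only [map_add, map_smul, map_sub, smul_eq_mul] at h2
  nlinarith

theorem aux_le_hull {d : ℕ} {V : Set (Fin d → ℝ)} (l : (Fin d → ℝ) →ₗ[ℝ] ℝ) {c : ℝ}
    (h : ∀ v ∈ V, l v ≤ c) : ∀ q ∈ convexHull ℝ V, l q ≤ c := fun _ hq =>
  convexHull_min (t := {x | l x ≤ c}) h (convex_halfSpace_le l.isLinear c) hq

/-- Existence of a facet through a boundary point. -/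
theorem aux_exists_facet {d : ℕ} (V : Finset (Fin d → ℝ)) {z : Fin d → ℝ}
    (hz : z ∈ convexHull ℝ (V : Set (Fin d → ℝ)))
    (hnz : z ∉ intrinsicInterior ℝ (convexHull ℝ (V : Set (Fin d → ℝ)))) :
    ∃ E, IsFacet (convexHull ℝ (V : Set (Fin d → ℝ))) E ∧ z ∈ E := by
  set Q := convexHull ℝ (V : Set (Fin d → ℝ)) with hQ
  have hQc : Convex ℝ Q := convex_convexHull _ _
  let Fc : ((Fin d → ℝ) →ₗ[ℝ] ℝ) → Set (Fin d → ℝ) := fun l => {q ∈ Q | l q = l z}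
  let good : ((Fin d → ℝ) →ₗ[ℝ] ℝ) → Prop := fun l =>
    (∀ q ∈ Q, l q ≤ l z) ∧ ∃ q ∈ Q, l q ≠ l z
  have hex : ∃ l, good l := by
    by_contra hcon
    apply hnz
    apply aux_ri_of_support hQc hz
    intro l hl q hq
    by_contra hne
    exact hcon ⟨l, hl, q, hq, hne⟩
  have hbd : ∀ l, polyDim (Fc l) ≤ d := by
    intro l
    have := Submodule.finrank_le (affineSpan ℝ (Fc l)).direction
    simpa [polyDim] using this
  obtain ⟨l, hl, hmax⟩ : ∃ l, good l ∧ ∀ l', good l' → polyDim (Fc l') ≤ polyDim (Fc l) := by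
    have hfin : (Set.range fun l : {l // good l} => polyDim (Fc l)).Finite :=
      (Set.finite_Iic d).subset (by rintro _ ⟨l, rfl⟩; exact hbd l)
    obtain ⟨l0, h0⟩ := hex
    obtain ⟨m, ⟨⟨l, hl⟩, rfl⟩, hm⟩ := Set.exists_max_image _ id hfin ⟨_, ⟨⟨l0, h0⟩, rfl⟩⟩
    exact ⟨l, hl, fun l' hl' => hm _ ⟨⟨l', hl'⟩, rfl⟩⟩
  obtain ⟨hle, q0, hq0, hne0⟩ := hl
  have hzF : ∀ l, z ∈ Fc l := fun l => ⟨hz, rfl⟩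
  refine ⟨Fc l, ⟨?_, ⟨z, hzF l⟩, ?_⟩, hzF l⟩
  · intro _
    refine ⟨LinearMap.toContinuousLinearMap l, ?_⟩
    ext x
    simp only [Fc, Set.mem_ofPred_eq, LinearMap.coe_toContinuousLinearMap']
    constructor
    · rintro ⟨h1, h2⟩
      exact ⟨h1, fun y hy => h2 ▸ hle y hy⟩
    · rintro ⟨h1, h2⟩
      exact ⟨h1, le_antisymm (hle x h1) (h2 z hz)⟩
  · have hDE : vectorSpan ℝ (Fc l) ≤ vectorSpan ℝ Q ⊓ LinearMap.ker l := by
      apply le_inf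
      · exact vectorSpan_mono ℝ fun x hx => hx.1
      · rw [vectorSpan_def, Submodule.span_le]
        rintro _ ⟨a, ha, b, hb, rfl⟩
        simp [ha.2, hb.2]
    have hlt : vectorSpan ℝ Q ⊓ LinearMap.ker l < vectorSpan ℝ Q := by
      refine lt_of_le_of_ne inf_le_left fun heq => hne0 ?_
      have : q0 -ᵥ z ∈ vectorSpan ℝ Q ⊓ LinearMap.ker l := by
        rw [heq]; exact vsub_mem_vectorSpan ℝ hq0 hz
      have := this.2
      simpa [sub_eq_zero] using this
    have hlt' := Submodule.finrank_lt_finrank_of_lt hlt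
    have hle' := Submodule.finrank_mono hDE
    simp only [aux_polyDim]
    by_contra hcon
    -- there is a direction in `ker l` missed by the face
    have hlt2 : vectorSpan ℝ (Fc l) < vectorSpan ℝ Q ⊓ LinearMap.ker l := by
      refine lt_of_le_of_ne hDE fun heq => hcon ?_
      rw [heq]
      have h1 := Submodule.finrank_sup_add_finrank_inf_eq (vectorSpan ℝ Q) (LinearMap.ker l)
      have h2 := LinearMap.finrank_range_add_finrank_ker l
      have h3 : Module.finrank ℝ (LinearMap.range l) ≤ 1 := by
        simpa using Submodule.finrank_le (LinearMap.range l)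
      have h4 := Submodule.finrank_le (vectorSpan ℝ Q ⊔ LinearMap.ker l)
      omega
    obtain ⟨w, hw, hwn⟩ := SetLike.exists_of_lt hlt2
    obtain ⟨m0, hm0, hm0k⟩ := Submodule.exists_le_ker_of_notMem hwn
    -- get the sign right
    obtain ⟨m, hm, hmk, v0, hv0, hv0m⟩ : ∃ m : (Fin d → ℝ) →ₗ[ℝ] ℝ, m w ≠ 0 ∧
        vectorSpan ℝ (Fc l) ≤ LinearMap.ker m ∧ ∃ v ∈ V, m z < m v := by
      by_contra hno
      push Not at hno
      have h1 := hno m0 hm0 hm0k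
      have h2 := hno (-m0) (by simpa using hm0) (by
        intro x hx
        have := hm0k hx
        simpa using this)
      simp only [LinearMap.neg_apply, neg_le_neg_iff] at h2
      have h3 : vectorSpan ℝ Q ≤ LinearMap.ker m0 := by
        rw [vectorSpan_def, Submodule.span_le]
        have : ∀ a ∈ Q, m0 a = m0 z := by
          intro a ha
          apply le_antisymm (aux_le_hull m0 h1 a ha)
          have := aux_le_hull (-m0) (c := - m0 z) (V := (V : Set _))
            (fun v hv => by simpa using h2 v hv) a ha
          simpa using this
        rintro _ ⟨a, ha, b, hb, rfl⟩
        simp [this a ha, this b hb]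
      exact hm0 (h3 hw.1)
    have hVQ : ∀ v ∈ V, v ∈ Q := fun v hv => subset_convexHull ℝ _ hv
    have hpos : ∀ v ∈ V, m z < m v → l v < l z := by
      intro v hv hmv
      refine lt_of_le_of_ne (hle v (hVQ v hv)) fun heq => ?_
      have : v -ᵥ z ∈ vectorSpan ℝ (Fc l) := vsub_mem_vectorSpan ℝ ⟨hVQ v hv, heq⟩ (hzF l)
      have := hmk this
      simp [sub_eq_zero] at this
      linarith
    obtain ⟨v1, hv1, hmin⟩ := Finset.exists_min_image (V.filter fun v => m z < m v)
      (fun v => (l z - l v) / (m v - m z)) ⟨v0, by simp [hv0, hv0m]⟩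
    simp only [Finset.mem_filter] at hv1 hmin
    set s := (l z - l v1) / (m v1 - m z) with hs
    have hs0 : 0 < s := div_pos (by linarith [hpos v1 hv1.1 hv1.2]) (by linarith [hv1.2])
    have hle2 : ∀ q ∈ Q, (l + s • m) q ≤ (l + s • m) z := by
      apply aux_le_hull
      intro v hv
      simp only [LinearMap.add_apply, LinearMap.smul_apply, smul_eq_mul]
      rcases lt_or_ge (m z) (m v) with h | h
      · have := hmin v ⟨hv, h⟩
        rw [le_div_iff₀ (by linarith)] at this
        linarith
      · have := hle v (hVQ v hv)
        nlinarith
    have hg : good (l + s • m) := by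
      refine ⟨hle2, ?_⟩
      by_contra hno
      push Not at hno
      have h3 : vectorSpan ℝ Q ≤ LinearMap.ker (l + s • m) := by
        rw [vectorSpan_def, Submodule.span_le]
        rintro _ ⟨a, ha, b, hb, rfl⟩
        have h1 := hno a ha
        have h2 := hno b hb
        simp only [SetLike.mem_coe, LinearMap.mem_ker, vsub_eq_sub, map_sub, h1, h2, sub_self]
      have h4 := h3 hw.1
      have h5 : l w = 0 := hw.2
      simp [h5, hs0.ne', hm] at h4
    have hd := hmax _ hg
    simp only [aux_polyDim] at hd
    have hsub : Fc l ⊆ Fc (l + s • m) := by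
      rintro x ⟨hx, hlx⟩
      refine ⟨hx, ?_⟩
      have : x -ᵥ z ∈ vectorSpan ℝ (Fc l) := vsub_mem_vectorSpan ℝ ⟨hx, hlx⟩ (hzF l)
      have := hmk this
      simp [sub_eq_zero] at this
      simp [hlx, this]
    have hv1F : v1 ∈ Fc (l + s • m) := by
      refine ⟨hVQ v1 hv1.1, ?_⟩
      simp only [LinearMap.add_apply, LinearMap.smul_apply, smul_eq_mul]
      have : s * (m v1 - m z) = l z - l v1 := div_mul_cancel₀ _ (by linarith [hv1.2])
      linarith
    have hlt3 : vectorSpan ℝ (Fc l) < vectorSpan ℝ (Fc (l + s • m)) := by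
      refine lt_of_le_of_ne (vectorSpan_mono ℝ hsub) fun heq => ?_
      have : v1 -ᵥ z ∈ vectorSpan ℝ (Fc l) := by
        rw [heq]; exact vsub_mem_vectorSpan ℝ hv1F (hzF _)
      have := (hDE this).2
      simp [sub_eq_zero] at this
      linarith [hpos v1 hv1.1 hv1.2]
    have := Submodule.finrank_lt_finrank_of_lt hlt3
    omega

theorem aux_unique {d : ℕ} (V : Finset (Fin d → ℝ)) {Q : Set (Fin d → ℝ)}
    (hQ : Q = convexHull ℝ (V : Set (Fin d → ℝ))) {x y : Fin d → ℝ}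
    (hx : x ∈ intrinsicInterior ℝ Q) (hxl : IsLatticePt x)
    (href : ∀ F : Set (Fin d → ℝ), IsFacet Q F →
      ∃ u : (Fin d → ℝ) →ᵃ[ℝ] ℝ, IsIntegralOn Q u ∧ ∀ f ∈ F, u f = u x + 1)
    (hy : y ∈ intrinsicInterior ℝ Q) (hyl : IsLatticePt y) : x = y := by
  by_contra hxy
  have hcomp : IsCompact Q := by rw [hQ]; exact V.finite_toSet.isCompact_convexHull ℝ
  have hxQ := intrinsicInterior_subset hx
  have hyQ := intrinsicInterior_subset hy
  have hyx : y - x ≠ 0 := sub_ne_zero.2 (Ne.symm hxy)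
  let φ : ℝ → (Fin d → ℝ) := fun t => x + t • (y - x)
  have hφc : Continuous φ := by fun_prop
  have hTcl : IsClosed (φ ⁻¹' Q) := hcomp.isClosed.preimage hφc
  have hTb : BddAbove (φ ⁻¹' Q) := by
    obtain ⟨R, hR⟩ := hcomp.isBounded.exists_norm_le
    refine ⟨(R + ‖x‖) / ‖y - x‖, fun t ht => ?_⟩
    have h1 := hR _ ht
    rw [le_div_iff₀ (norm_pos_iff.2 hyx)]
    have h2 : ‖t • (y - x)‖ ≤ ‖φ t‖ + ‖x‖ := by
      have : t • (y - x) = φ t - x := by simp [φ]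
      rw [this]; exact norm_sub_le _ _
    rw [norm_smul] at h2
    have : t * ‖y - x‖ ≤ ‖t‖ * ‖y - x‖ :=
      mul_le_mul_of_nonneg_right (le_abs_self t) (norm_nonneg _)
    linarith
  have hTne : (φ ⁻¹' Q).Nonempty := ⟨0, by simpa [φ] using hxQ⟩
  set t := sSup (φ ⁻¹' Q) with ht
  have htT : φ t ∈ Q := hTcl.csSup_mem hTne hTb
  have ht1 : 1 < t := by
    obtain ⟨s, hs, h1⟩ := aux_extend_beyond hy (subset_affineSpan ℝ Q hxQ)
    have : (1 + s) ∈ φ ⁻¹' Q := by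
      rw [Set.mem_preimage]
      convert h1 using 1
      simp only [φ]
      module
    have := le_csSup hTb this
    linarith
  have hnri : φ t ∉ intrinsicInterior ℝ Q := by
    intro hri
    obtain ⟨s, hs, h1⟩ := aux_extend_beyond hri (subset_affineSpan ℝ Q hxQ)
    have : (t + s * t) ∈ φ ⁻¹' Q := by
      rw [Set.mem_preimage]
      convert h1 using 1
      simp only [φ]
      module
    have := le_csSup hTb this
    nlinarith
  subst hQ
  obtain ⟨E, hE, hzE⟩ := aux_exists_facet V htT hnri
  obtain ⟨u, hu, huE⟩ := href E hE
  have h1 := huE _ hzE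
  have hφl : φ t = AffineMap.lineMap x y t := by
    simp only [φ, AffineMap.lineMap_apply_module]; module
  rw [hφl, AffineMap.apply_lineMap, AffineMap.lineMap_apply_ring'] at h1
  obtain ⟨a, ha⟩ := hu x (subset_affineSpan ℝ _ hxQ) hxl
  obtain ⟨b, hb⟩ := hu y (subset_affineSpan ℝ _ hyQ) hyl
  rw [ha, hb] at h1
  have h2 : t * ((b - a : ℤ) : ℝ) = 1 := by push_cast; linarith
  have h3 : (0:ℝ) < ((b - a : ℤ) : ℝ) := by
    by_contra hcon
    push Not at hcon
    nlinarith
  have h4 : (1:ℝ) ≤ ((b - a : ℤ) : ℝ) := by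
    have : 0 < b - a := by exact_mod_cast h3
    exact_mod_cast this
  nlinarith

theorem aux_lat_add {d : ℕ} {x y : Fin d → ℝ} (hx : IsLatticePt x) (hy : IsLatticePt y) :
    IsLatticePt (x + y) := fun i => by
  obtain ⟨a, ha⟩ := hx i
  obtain ⟨b, hb⟩ := hy i
  exact ⟨a + b, by simp [ha, hb]⟩

theorem aux_lat_zsmul {d : ℕ} {x : Fin d → ℝ} (hx : IsLatticePt x) (k : ℤ) :
    IsLatticePt ((k : ℝ) • x) := fun i => by
  obtain ⟨a, ha⟩ := hx i
  exact ⟨k * a, by simp [ha]⟩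

theorem aux_affine_comb {d : ℕ} {E : Type*} [AddCommGroup E] [Module ℝ E]
    (φ : (Fin d → ℝ) →ᵃ[ℝ] E) (f p : Fin d → ℝ) (a : ℝ) :
    φ (a • f + (1 - a) • p) = a • φ f + (1 - a) • φ p := by
  have := φ.apply_lineMap p f a
  rw [AffineMap.lineMap_apply_module, AffineMap.lineMap_apply_module] at this
  rw [add_comm, this, add_comm]

theorem aux_comb_mem {d : ℕ} {A : AffineSubspace ℝ (Fin d → ℝ)} {f p : Fin d → ℝ} (hf : f ∈ A)
    (hp : p ∈ A) (a : ℝ) : a • f + (1 - a) • p ∈ A := by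
  have := AffineMap.lineMap_mem a hp hf
  rwa [AffineMap.lineMap_apply_module, add_comm] at this

theorem aux_lat_comb {d : ℕ} {f p : Fin d → ℝ} {a : ℕ} (hf : IsLatticePt ((a : ℝ) • f))
    (hp : IsLatticePt p) : IsLatticePt ((a : ℝ) • f + (1 - (a : ℝ)) • p) := by
  have := aux_lat_add hf (aux_lat_zsmul hp (1 - a))
  simpa using this

theorem aux_lat_scale {d e : ℕ} {F : Set (Fin d → ℝ)} (φ : (Fin d → ℝ) →ᵃ[ℝ] (Fin e → ℝ))
    (hφ : ∀ x ∈ affineSpan ℝ F, IsLatticePt x → IsLatticePt (φ x)) {f p : Fin d → ℝ}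
    (hf : f ∈ affineSpan ℝ F) (hp : p ∈ affineSpan ℝ F) (hpl : IsLatticePt p) (a : ℕ)
    (hfl : IsLatticePt ((a : ℝ) • f)) : IsLatticePt ((a : ℝ) • φ f) := by
  have h1 := hφ _ (aux_comb_mem hf hp a) (aux_lat_comb hfl hpl)
  rw [aux_affine_comb] at h1
  have h2 := aux_lat_add h1 (aux_lat_zsmul (hφ p hp hpl) (a - 1))
  convert h2 using 1
  push_cast
  module

theorem aux_int_scale {d : ℕ} {F : Set (Fin d → ℝ)} (φ : (Fin d → ℝ) →ᵃ[ℝ] ℝ)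
    (hφ : IsIntegralOn F φ) {f p : Fin d → ℝ}
    (hf : f ∈ affineSpan ℝ F) (hp : p ∈ affineSpan ℝ F) (hpl : IsLatticePt p) (a : ℕ)
    (hfl : IsLatticePt ((a : ℝ) • f)) : ∃ z : ℤ, (a : ℝ) * φ f = z := by
  obtain ⟨z, hz⟩ := hφ _ (aux_comb_mem hf hp a) (aux_lat_comb hfl hpl)
  obtain ⟨z', hz'⟩ := hφ p hp hpl
  rw [aux_affine_comb, hz'] at hz
  refine ⟨z + (a - 1) * z', ?_⟩
  simp only [smul_eq_mul] at hz
  push_cast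
  linarith

theorem aux_not_hollow {d : ℕ} {F : Set (Fin d → ℝ)} (hF : IsLatticePolytope F) :
    ∃ r : ℕ, 0 < r ∧ ¬ IsHollow ((r : ℝ) • F) := by
  obtain ⟨V, hne, hV, rfl⟩ := hF
  have hc : (0 : ℝ) < V.card := by exact_mod_cast hne.card_pos
  refine ⟨V.card, hne.card_pos, fun hol => hol (∑ v ∈ V, v) ?_ ?_⟩
  · apply aux_ri_of_support ((convex_convexHull ℝ _).smul _)
    · refine ⟨∑ v ∈ V, ((V.card : ℝ)⁻¹) • v, ?_, ?_⟩
      · apply (convex_convexHull ℝ _).sum_mem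
        · intros; positivity
        · simp [hc.ne']
        · intro v hv; exact subset_convexHull ℝ _ hv
      · beta_reduce
        rw [← Finset.smul_sum, smul_smul, mul_inv_cancel₀ hc.ne', one_smul]
    · intro l hl
      rw [map_sum] at hl ⊢
      have h1 : ∀ v ∈ V, (V.card : ℝ) * l v ≤ ∑ w ∈ V, l w := by
        intro v hv
        have := hl ((V.card : ℝ) • v) (Set.smul_mem_smul_set (subset_convexHull ℝ _ hv))
        simpa using this
      have h2 : ∑ v ∈ V, (V.card : ℝ) * l v = ∑ v ∈ V, ∑ w ∈ V, l w := by
        rw [← Finset.mul_sum]; simp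
      have h3 := (Finset.sum_eq_sum_iff_of_le h1).1 h2
      have h4 : ∀ v ∈ V, l v = (∑ w ∈ V, l w) / V.card := fun v hv => by
        rw [eq_div_iff hc.ne', ← h3 v hv, mul_comm]
      rintro _ ⟨q, hq, rfl⟩
      have h5 := aux_le_hull l (fun v hv => (h4 v hv).le) q hq
      have h6 := aux_le_hull (-l) (c := -((∑ w ∈ V, l w) / V.card)) (V := (V : Set _))
        (fun v hv => by simpa using (h4 v hv).ge) q hq
      simp only [LinearMap.neg_apply, neg_le_neg_iff] at h6
      have h7 := le_antisymm h5 h6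
      simp only [map_smul, smul_eq_mul, h7]
      field_simp
  · intro i
    choose! z hz using fun v hv => hV v hv i
    exact ⟨∑ v ∈ V, z v, by rw [Finset.sum_apply]; push_cast; exact Finset.sum_congr rfl hz⟩

theorem aux_codeg {d : ℕ} {F : Set (Fin d → ℝ)} (hF : IsLatticePolytope F) :
    0 < polyCodeg F ∧ ∃ f ∈ F, IsLatticePt ((polyCodeg F : ℝ) • f) ∧
      ∀ u : (Fin d → ℝ) →ᵃ[ℝ] ℝ, (∀ q ∈ F, u q ≤ u f) → ∀ q ∈ F, u q = u f := by
  have hmem : polyCodeg F ∈ {r : ℕ | 0 < r ∧ ¬ IsHollow ((r : ℝ) • F)} :=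
    Nat.sInf_mem (aux_not_hollow hF)
  obtain ⟨h0, h1⟩ := hmem
  refine ⟨h0, ?_⟩
  have h0' : (0 : ℝ) < polyCodeg F := by exact_mod_cast h0
  simp only [IsHollow] at h1
  push Not at h1
  obtain ⟨x, hx, hxl⟩ := h1
  obtain ⟨f, hf, rfl⟩ := intrinsicInterior_subset hx
  refine ⟨f, hf, hxl, fun u hu q hq => ?_⟩
  have hdec : ∀ x, u x = u.linear x + u 0 := fun x => by
    have := congrFun u.decomp x
    simpa using this
  have h2 := aux_support_of_ri hx u.linear (by
    rintro _ ⟨q, hq, rfl⟩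
    have := hu q hq
    rw [hdec q, hdec f] at this
    simp only [map_smul, smul_eq_mul]
    nlinarith) ((polyCodeg F : ℝ) • q) (Set.smul_mem_smul_set hq)
  simp only [map_smul, smul_eq_mul] at h2
  rw [hdec q, hdec f]
  have := mul_left_cancel₀ h0'.ne' h2
  linarith

theorem aux_const_hull {d : ℕ} {V : Set (Fin d → ℝ)} (u : (Fin d → ℝ) →ᵃ[ℝ] ℝ) {c : ℝ}
    (h : ∀ v ∈ V, u v = c) : ∀ q ∈ convexHull ℝ V, u q = c := fun _ hq =>
  convexHull_min (t := u ⁻¹' {c}) h ((convex_singleton c).affine_preimage u) hq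

/-- Appending a constant block, as an affine map. -/
noncomputable def auxAppend {n k : ℕ} (c : Fin k → ℝ) : (Fin n → ℝ) →ᵃ[ℝ] (Fin (n + k) → ℝ) where
  toFun x := Fin.append x c
  linear :=
    { toFun := fun x => Fin.append x 0
      map_add' := fun x y => by
        ext i; refine Fin.addCases (fun j => ?_) (fun j => ?_) i <;> simp
      map_smul' := fun a x => by
        ext i; refine Fin.addCases (fun j => ?_) (fun j => ?_) i <;> simp }
  map_vadd' x v := by
    ext i; refine Fin.addCases (fun j => ?_) (fun j => ?_) i <;> simp

/-- Appending a zero at the end, as an affine map. -/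
noncomputable def auxSnoc {n : ℕ} (w : (Fin n → ℝ) →ᵃ[ℝ] ℝ) (v : Fin n → ℝ) :
    (Fin n → ℝ) →ᵃ[ℝ] (Fin (n + 1) → ℝ) where
  toFun x := Fin.snoc (x - v) (w x)
  linear :=
    { toFun := fun x => Fin.snoc x (w.linear x)
      map_add' := fun x y => by
        ext i; refine Fin.lastCases ?_ (fun j => ?_) i <;> simp
      map_smul' := fun a x => by
        ext i; refine Fin.lastCases ?_ (fun j => ?_) i <;> simp }
  map_vadd' x v := by
    ext i
    have h := w.map_vadd x v
    simp only [vadd_eq_add] at h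
    refine Fin.lastCases ?_ (fun j => ?_) i <;> simp [add_sub_assoc, h]

/-- Forget the last coordinate and translate. -/
noncomputable def auxInit {n : ℕ} (v : Fin n → ℝ) :
    (Fin (n + 1) → ℝ) →ᵃ[ℝ] (Fin n → ℝ) where
  toFun x := fun i => x i.castSucc + v i
  linear :=
    { toFun := fun x => fun i => x i.castSucc
      map_add' := fun x y => by ext i; simp
      map_smul' := fun a x => by ext i; simp }
  map_vadd' x v := by ext i; simp [add_assoc]

theorem aux_mk_pyr {d : ℕ} {P : Set (Fin d → ℝ)} (S : Finset (Fin d → ℝ)) (hS : S.Nonempty)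
    (hSl : ∀ s ∈ S, IsLatticePt s) {v : Fin d → ℝ} (hv : IsLatticePt v)
    (hP : P = convexHull ℝ (insert v (S : Set (Fin d → ℝ))))
    (w : (Fin d → ℝ) →ᵃ[ℝ] ℝ) (hw : IsIntegralOn P w) (hwS : ∀ s ∈ S, w s = 0) (hwv : w v = 1) :
    IsLatticePyramid P := by
  classical
  right
  let τ : (Fin d → ℝ) →ᵃ[ℝ] (Fin d → ℝ) := AffineMap.id ℝ _ - AffineMap.const ℝ _ v
  have hτ : ∀ x, τ x = x - v := fun x => rfl
  let σ : (Fin d → ℝ) →ᵃ[ℝ] (Fin (d + 1) → ℝ) := auxSnoc 0 0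
  have hσ : ∀ x, σ x = Fin.snoc x (0 : ℝ) := fun x => by
    have : σ x = Fin.snoc (x - 0 : Fin d → ℝ) (0 : ℝ) := rfl
    rw [this, sub_zero]
  have hf : ∀ x, auxSnoc w v x = Fin.snoc (x - v) (w x) := fun x => rfl
  have hgf : ∀ x, auxInit v (auxSnoc w v x) = x := fun x => by
    ext i
    rw [hf]
    simp [auxInit]
  have himg : (auxSnoc w v) '' P = pyramidOver (convexHull ℝ ((S.image τ : Finset _) : Set (Fin d → ℝ))) := by
    rw [hP, pyramidOver, AffineMap.image_convexHull]
    have h1 : (fun x : Fin d → ℝ => (Fin.snoc x (0 : ℝ) : Fin (d + 1) → ℝ)) = σ := by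
      funext x; rw [hσ]
    rw [h1, AffineMap.image_convexHull, convexHull_convexHull_union_left, Set.image_insert_eq,
      Set.union_singleton]
    congr 2
    · rw [hf, hwv, sub_self]
    · rw [Finset.coe_image, Set.image_image]
      apply Set.image_congr
      intro s hs
      rw [hf, hwS s hs, hσ, hτ]
  refine ⟨d, convexHull ℝ ((S.image τ : Finset _) : Set (Fin d → ℝ)),
    ⟨S.image τ, hS.image _, ?_, rfl⟩, auxSnoc w v, auxInit v, himg, ?_, fun x _ => hgf x, ?_, ?_, ?_⟩
  · intro x hx
    obtain ⟨s, hs, rfl⟩ := Finset.mem_image.1 hx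
    rw [hτ, sub_eq_add_neg]
    exact aux_lat_add (hSl s hs) (by simpa using aux_lat_zsmul hv (-1))
  · rw [← himg, Set.image_image]
    simp [hgf]
  · intro y hy
    rw [← himg, ← AffineSubspace.map_span] at hy
    obtain ⟨x, hx, rfl⟩ := (AffineSubspace.mem_map).1 hy
    rw [hgf]
  · intro x hx hxl i
    rw [hf]
    refine Fin.lastCases ?_ (fun j => ?_) i
    · simpa using hw x hx hxl
    · obtain ⟨a, ha⟩ := hxl j
      obtain ⟨b, hb⟩ := hv j
      exact ⟨a - b, by simp [ha, hb]⟩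
  · intro y hy hyl i
    obtain ⟨a, ha⟩ := hyl i.castSucc
    obtain ⟨b, hb⟩ := hv i
    exact ⟨a + b, by simp [auxInit, ha, hb]⟩

theorem aux_pyr_data {d : ℕ} {F : Set (Fin d → ℝ)} (hF : IsLatticePyramid F) :
    ∃ (S : Finset (Fin d → ℝ)) (v : Fin d → ℝ) (h : (Fin d → ℝ) →ᵃ[ℝ] ℝ),
      (∀ s ∈ S, IsLatticePt s) ∧ IsLatticePt v ∧
      F = convexHull ℝ (insert v (S : Set (Fin d → ℝ))) ∧ (∀ s ∈ S, h s = 0) ∧ h v = 1 ∧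
      IsIntegralOn F h := by
  classical
  rcases hF with ⟨x, hx, rfl⟩ | ⟨m, P', ⟨V, hVne, hVl, rfl⟩, f, g, hfP, hgQ, hgf, hfg, hfl, hgl⟩
  · exact ⟨∅, x, AffineMap.const ℝ _ 1, by simp, hx, by simp, by simp, by simp,
      fun y _ _ => ⟨1, by simp⟩⟩
  · let σ : (Fin m → ℝ) →ᵃ[ℝ] (Fin (m + 1) → ℝ) := auxSnoc 0 0
    have hσ : ∀ x, σ x = Fin.snoc x (0 : ℝ) := fun x => by
      have : σ x = Fin.snoc (x - 0 : Fin m → ℝ) (0 : ℝ) := rfl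
      rw [this, sub_zero]
    have h1 : (fun x : Fin m → ℝ => (Fin.snoc x (0 : ℝ) : Fin (m + 1) → ℝ)) = σ := by
      funext x; rw [hσ]
    set a : Fin (m + 1) → ℝ := Fin.snoc (0 : Fin m → ℝ) (1 : ℝ) with ha
    have hQ : pyramidOver (convexHull ℝ (V : Set (Fin m → ℝ))) =
        convexHull ℝ (insert a (σ '' V)) := by
      rw [pyramidOver, h1, AffineMap.image_convexHull, convexHull_convexHull_union_left,
        Set.union_singleton]
    rw [hQ] at hfP hgQ hfg hgl
    have hsub : ∀ y ∈ insert a (σ '' V), y ∈ affineSpan ℝ (convexHull ℝ (insert a (σ '' V))) :=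
      fun y hy => subset_affineSpan ℝ _ (subset_convexHull ℝ _ hy)
    have hσl : ∀ x, IsLatticePt x → IsLatticePt (σ x) := by
      intro x hx i
      rw [hσ]
      refine Fin.lastCases ?_ (fun j => ?_) i
      · exact ⟨0, by simp⟩
      · simpa using hx j
    have hal : IsLatticePt a := by
      intro i
      refine Fin.lastCases ?_ (fun j => ?_) i
      · exact ⟨1, by simp [ha]⟩
      · exact ⟨0, by simp [ha]⟩
    refine ⟨(V.image σ).image g, g a,
      (LinearMap.proj (R := ℝ) (φ := fun _ : Fin (m + 1) => ℝ) (Fin.last m)).toAffineMap.comp f,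
      ?_, hgl _ (hsub a (Set.mem_insert _ _)) hal, ?_, ?_, ?_, ?_⟩
    · intro s hs
      simp only [Finset.mem_image, exists_exists_and_eq_and] at hs
      obtain ⟨x, hx, rfl⟩ := hs
      exact hgl _ (hsub _ (Or.inr ⟨x, hx, rfl⟩)) (hσl x (hVl x hx))
    · rw [← hgQ, AffineMap.image_convexHull, Set.image_insert_eq]
      simp
    · intro s hs
      simp only [Finset.mem_image, exists_exists_and_eq_and] at hs
      obtain ⟨x, hx, rfl⟩ := hs
      rw [AffineMap.comp_apply, hfg _ (hsub _ (Or.inr ⟨x, hx, rfl⟩)), hσ]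
      simp
    · rw [AffineMap.comp_apply, hfg _ (hsub a (Set.mem_insert _ _)), ha]
      simp
    · intro y hy hyl
      exact hfl y hy hyl (Fin.last m)

theorem aux_facet {d : ℕ} {P : Set (Fin d → ℝ)} {S : Set (Fin d → ℝ)} (hS : S.Nonempty)
    {v : Fin d → ℝ} (hP : P = convexHull ℝ (insert v S))
    (H : (Fin d → ℝ) →ᵃ[ℝ] ℝ) (hHS : ∀ s ∈ S, H s = 0) (hHv : H v = 1) :
    IsFacet P (convexHull ℝ S) := by
  have hdec : ∀ x, H x = H.linear x + H 0 := fun x => by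
    have := congrFun H.decomp x
    simpa using this
  have hH0 := aux_const_hull H hHS
  have hSP : convexHull ℝ S ⊆ P := by rw [hP]; exact convexHull_mono (Set.subset_insert _ _)
  have hin : ∀ x ∈ P, 0 ≤ H x ∧ (H x = 0 → x ∈ convexHull ℝ S) := by
    intro x hx
    rw [hP, convexHull_insert hS] at hx
    simp only [convexJoin, Set.mem_singleton_iff, Set.iUnion_iUnion_eq_left, Set.mem_iUnion] at hx
    obtain ⟨s, hs, a, b, ha, hb, hab, rfl⟩ := hx
    have hb' : b = 1 - a := by linarith
    subst hb'
    rw [aux_affine_comb, hHv, hH0 s hs]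
    simp only [smul_eq_mul, mul_one, mul_zero, add_zero]
    refine ⟨ha, fun h => ?_⟩
    subst h
    simpa using hs
  obtain ⟨s0, hs0⟩ := hS
  have hs0' := subset_convexHull ℝ _ hs0
  refine ⟨fun _ => ⟨LinearMap.toContinuousLinearMap (-H.linear), ?_⟩, ⟨s0, hs0'⟩, ?_⟩
  · ext x
    simp only [Set.mem_ofPred_eq, LinearMap.coe_toContinuousLinearMap', LinearMap.neg_apply,
      neg_le_neg_iff]
    constructor
    · intro hx
      refine ⟨hSP hx, fun y hy => ?_⟩
      have h1 := (hin y hy).1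
      have h2 := hH0 x hx
      rw [hdec] at h1 h2
      linarith
    · rintro ⟨hx, h⟩
      apply (hin x hx).2
      apply le_antisymm _ (hin x hx).1
      have h1 := h s0 (hSP hs0')
      have h2 := hHS s0 hs0
      rw [hdec] at h2 ⊢
      linarith
  · rw [aux_polyDim, aux_polyDim, ← direction_affineSpan, ← direction_affineSpan ℝ P, hP,
      affineSpan_convexHull, affineSpan_convexHull, direction_affineSpan, direction_affineSpan]
    apply le_antisymm
    · apply Nat.succ_le_of_lt
      apply Submodule.finrank_lt_finrank_of_lt
      refine lt_of_le_of_ne (vectorSpan_mono ℝ (Set.subset_insert _ _)) fun heq => ?_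
      have h1 : v -ᵥ s0 ∈ vectorSpan ℝ S := by
        rw [heq]
        exact vsub_mem_vectorSpan ℝ (Set.mem_insert _ _) (Set.mem_insert_of_mem _ hs0)
      have h2 : vectorSpan ℝ S ≤ LinearMap.ker H.linear := by
        rw [vectorSpan_def, Submodule.span_le]
        rintro _ ⟨a, ha, b, hb, rfl⟩
        simp only [SetLike.mem_coe, LinearMap.mem_ker]
        rw [AffineMap.linearMap_vsub, hHS a ha, hHS b hb]; simp
      have h3 := h2 h1
      rw [LinearMap.mem_ker, AffineMap.linearMap_vsub, hHv, hHS s0 hs0] at h3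
      simp at h3
    · exact finrank_vectorSpan_insert_le_set ℝ S v

theorem aux_separate {d : ℕ} {S : Set (Fin d → ℝ)} (hS : S.Nonempty) {v : Fin d → ℝ}
    (hv : v ∉ affineSpan ℝ S) :
    ∃ H : (Fin d → ℝ) →ᵃ[ℝ] ℝ, (∀ s ∈ S, H s = 0) ∧ H v = 1 := by
  obtain ⟨s0, hs0⟩ := hS
  have h1 : v - s0 ∉ vectorSpan ℝ S := by
    intro h
    apply hv
    have := AffineSubspace.vadd_mem_of_mem_direction
      (by rwa [direction_affineSpan] : v - s0 ∈ (affineSpan ℝ S).direction)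
      (subset_affineSpan ℝ S hs0)
    simpa using this
  obtain ⟨f, hf, hfk⟩ := Submodule.exists_le_ker_of_notMem h1
  refine ⟨(f (v - s0))⁻¹ • (f.toAffineMap - AffineMap.const ℝ _ (f s0)), fun s hs => ?_, ?_⟩
  · have h2 := hfk (vsub_mem_vectorSpan ℝ hs hs0)
    have h3 : f s - f s0 = 0 := by simpa using h2
    simp [h3]
  · have : f v - f s0 = f (v - s0) := by simp
    change (f (v - s0))⁻¹ * (f v - f s0) = 1
    rw [this]
    exact inv_mul_cancel₀ hf

theorem aux_vectorSpan_image {d e : ℕ} (φ : (Fin d → ℝ) →ᵃ[ℝ] (Fin e → ℝ)) (S : Set (Fin d → ℝ)) :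
    Module.finrank ℝ (vectorSpan ℝ (φ '' S)) ≤ Module.finrank ℝ (vectorSpan ℝ S) := by
  rw [← AffineMap.map_vectorSpan]
  exact Submodule.finrank_map_le _ _

/-- If a Gorenstein polytope `P` is reducible with factors `F` and `G` and `F` is a
lattice pyramid, then `P` is a lattice pyramid. -/
theorem stmt12 {N n : ℕ} (P : Set (Fin N → ℝ)) (F G : Set (Fin n → ℝ))
    (hP : IsLatticePolytope P) (hF : IsLatticePolytope F) (hG : IsLatticePolytope G)
    (hGor : IsGorenstein P) (hred : IsReducibleWith P F G)
    (hFpyr : IsLatticePyramid F) :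
    IsLatticePyramid P := by
  classical
  obtain ⟨SF, vF, h, hSFl, hvFl, hFeq, hhS, hhv, hhint⟩ := aux_pyr_data hFpyr
  obtain ⟨ha0, f, hfF, hfl, hfri⟩ := aux_codeg hF
  obtain ⟨hb0, g, hgG, hgl, hgri⟩ := aux_codeg hG
  obtain ⟨⟨⟨_, γ, -, hγQ, -, -, -, hγl⟩, hdim⟩, hcod⟩ := hred
  obtain ⟨r, hr0, x, hx, hxl, href⟩ := hGor
  have hrcod : polyCodeg P ≤ r := Nat.sInf_le ⟨hr0, fun hol => hol x hx hxl⟩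
  set a := polyCodeg F with ha
  set b := polyCodeg G with hb
  have hr0' : (0 : ℝ) < r := by exact_mod_cast hr0
  have ha0' : (0 : ℝ) < a := by exact_mod_cast ha0
  have hb0' : (0 : ℝ) < b := by exact_mod_cast hb0
  have habr : (a : ℝ) + b ≤ r := by
    have : a + b ≤ r := by omega
    exact_mod_cast this
  obtain ⟨VG, hVGne, hVGl, hGeq⟩ := hG
  obtain ⟨VP, hVPne, hVPl, hPeq⟩ := hP
  -- embeddings of the factors in the space of `P`
  let iF : (Fin n → ℝ) →ᵃ[ℝ] (Fin N → ℝ) := γ.comp (auxAppend ![(1 : ℝ), 0])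
  let iG : (Fin n → ℝ) →ᵃ[ℝ] (Fin N → ℝ) := γ.comp (auxAppend ![(0 : ℝ), 1])
  have hPun : P = convexHull ℝ (iF '' F ∪ iG '' G) := by
    rw [← hγQ, cayleyTwo, AffineMap.image_convexHull, Set.image_union, Set.image_image,
      Set.image_image]
    rfl
  have hFP : ∀ q ∈ F, iF q ∈ P := fun q hq => by
    rw [hPun]; exact subset_convexHull ℝ _ (Or.inl ⟨q, hq, rfl⟩)
  have hGP : ∀ q ∈ G, iG q ∈ P := fun q hq => by
    rw [hPun]; exact subset_convexHull ℝ _ (Or.inr ⟨q, hq, rfl⟩)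
  have happ : ∀ (c : Fin 2 → ℝ), IsLatticePt c → ∀ (K : Set (Fin n → ℝ)),
      (auxAppend c) '' K ⊆ cayleyTwo F G → ∀ y ∈ affineSpan ℝ K, IsLatticePt y →
      IsLatticePt (γ (auxAppend c y)) := by
    intro c hc K hK y hy hyl
    apply hγl
    · apply affineSpan_mono ℝ hK
      rw [← AffineSubspace.map_span]
      exact AffineSubspace.mem_map_of_mem _ hy
    · intro i
      change ∃ z : ℤ, Fin.append y c i = z
      refine Fin.addCases (fun j => ?_) (fun j => ?_) i
      · simpa using hyl j
      · simpa using hc j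
  have hiFl : ∀ y ∈ affineSpan ℝ F, IsLatticePt y → IsLatticePt (iF y) := by
    apply happ
    · intro i; fin_cases i
      · exact ⟨1, by simp⟩
      · exact ⟨0, by simp⟩
    · exact fun y hy => subset_convexHull ℝ _ (Or.inl hy)
  have hiGl : ∀ y ∈ affineSpan ℝ G, IsLatticePt y → IsLatticePt (iG y) := by
    apply happ
    · intro i; fin_cases i
      · exact ⟨0, by simp⟩
      · exact ⟨1, by simp⟩
    · exact fun y hy => subset_convexHull ℝ _ (Or.inr hy)
  have hvFF : vF ∈ F := by rw [hFeq]; exact subset_convexHull ℝ _ (Set.mem_insert _ _)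
  have hSFF : ∀ s ∈ SF, s ∈ F := fun s hs => by
    rw [hFeq]; exact subset_convexHull ℝ _ (Set.mem_insert_of_mem _ hs)
  have hVGG : ∀ s ∈ VG, s ∈ G := fun s hs => by
    rw [hGeq]; exact subset_convexHull ℝ _ hs
  have haff : ∀ {k : ℕ} {K : Set (Fin k → ℝ)} {q : Fin k → ℝ}, q ∈ K → q ∈ affineSpan ℝ K :=
    fun hq => subset_affineSpan ℝ _ hq
  -- the base and apex
  let S : Finset (Fin N → ℝ) := SF.image iF ∪ VG.image iG
  have hScoe : (S : Set (Fin N → ℝ)) = iF '' SF ∪ iG '' VG := by simp [S]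
  set v := iF vF with hv
  have hPS : P = convexHull ℝ (insert v (S : Set (Fin N → ℝ))) := by
    rw [hPun, hFeq, hGeq, AffineMap.image_convexHull, AffineMap.image_convexHull,
      convexHull_convexHull_union_left, convexHull_convexHull_union_right, hScoe,
      Set.image_insert_eq, Set.insert_union]
  have hSl : ∀ s ∈ S, IsLatticePt s := by
    intro s hs
    simp only [S, Finset.mem_union, Finset.mem_image] at hs
    rcases hs with ⟨q, hq, rfl⟩ | ⟨q, hq, rfl⟩
    · exact hiFl q (haff (hSFF q hq)) (hSFl q hq)
    · exact hiGl q (haff (hVGG q hq)) (hVGl q hq)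
  obtain ⟨p, hp⟩ := hVGne
  set s := iG p with hs
  have hsS : s ∈ S := Finset.mem_union_right _ (Finset.mem_image_of_mem _ hp)
  have hSP : ∀ q ∈ S, q ∈ P := fun q hq => by
    rw [hPS]; exact subset_convexHull ℝ _ (Set.mem_insert_of_mem _ hq)
  have hvP : v ∈ P := hFP _ hvFF
  have hvl : IsLatticePt v := hiFl vF (haff hvFF) hvFl
  -- the apex is not in the affine hull of the base
  have hvS : v ∉ affineSpan ℝ (S : Set (Fin N → ℝ)) := by
    intro hmem
    have hPdim : polyDim P = Module.finrank ℝ (affineSpan ℝ (S : Set (Fin N → ℝ))).direction := by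
      rw [polyDim, hPS, affineSpan_convexHull, affineSpan_insert_eq_affineSpan ℝ hmem]
    have hGdim : Module.finrank ℝ (vectorSpan ℝ (iG '' (VG : Set (Fin n → ℝ)))) ≤ polyDim G := by
      rw [aux_polyDim]
      exact (aux_vectorSpan_image _ _).trans
        (Submodule.finrank_mono (vectorSpan_mono ℝ fun q hq => hVGG q hq))
    rcases SF.eq_empty_or_nonempty with he | ⟨s1, hs1⟩
    · rw [hScoe, he, Finset.coe_empty, Set.image_empty, Set.empty_union,
        direction_affineSpan] at hPdim
      omega
    · have hFdim : Module.finrank ℝ (vectorSpan ℝ (iF '' (SF : Set (Fin n → ℝ)))) < polyDim F := by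
        rw [aux_polyDim]
        refine (aux_vectorSpan_image _ _).trans_lt (Submodule.finrank_lt_finrank_of_lt ?_)
        refine lt_of_le_of_ne (vectorSpan_mono ℝ fun q hq => hSFF q hq) fun heq => ?_
        have h1 : vF -ᵥ s1 ∈ vectorSpan ℝ (SF : Set (Fin n → ℝ)) := by
          rw [heq]
          exact vsub_mem_vectorSpan ℝ hvFF (hSFF s1 hs1)
        have h2 : vectorSpan ℝ (SF : Set (Fin n → ℝ)) ≤ LinearMap.ker h.linear := by
          rw [vectorSpan_def, Submodule.span_le]
          rintro _ ⟨a, ha, b, hb, rfl⟩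
          simp only [SetLike.mem_coe, LinearMap.mem_ker]
          rw [AffineMap.linearMap_vsub, hhS a ha, hhS b hb]; simp
        have h3 := h2 h1
        rw [LinearMap.mem_ker, AffineMap.linearMap_vsub, hhv, hhS s1 hs1] at h3
        simp at h3
      rw [hScoe, AffineSubspace.span_union, AffineSubspace.direction_sup
        (haff (Set.mem_image_of_mem iF hs1) : iF s1 ∈ affineSpan ℝ (iF '' (SF : Set (Fin n → ℝ))))
        (haff (Set.mem_image_of_mem iG hp) : iG p ∈ affineSpan ℝ (iG '' (VG : Set (Fin n → ℝ)))),
        direction_affineSpan, direction_affineSpan] at hPdim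
      have h1 := Submodule.finrank_add_le_finrank_add_finrank
        (vectorSpan ℝ (iF '' (SF : Set (Fin n → ℝ))) ⊔ vectorSpan ℝ (iG '' (VG : Set (Fin n → ℝ))))
        (Submodule.span ℝ {iG p -ᵥ iF s1})
      have h2 := Submodule.finrank_add_le_finrank_add_finrank
        (vectorSpan ℝ (iF '' (SF : Set (Fin n → ℝ)))) (vectorSpan ℝ (iG '' (VG : Set (Fin n → ℝ))))
      have h3 := finrank_span_le_card (R := ℝ) ({iG p -ᵥ iF s1} : Set (Fin N → ℝ))
      simp only [Set.toFinset_singleton, Finset.card_singleton] at h3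
      omega
  obtain ⟨H, hHS, hHv⟩ := aux_separate ⟨s, hsS⟩ hvS
  -- the facet and its functional
  have hrP : (r : ℝ) • P = convexHull ℝ (insert ((r : ℝ) • v) ((r : ℝ) • (S : Set (Fin N → ℝ)))) := by
    rw [hPS, ← convexHull_smul, Set.smul_set_insert]
  have hfac : IsFacet ((r : ℝ) • P) (convexHull ℝ ((r : ℝ) • (S : Set (Fin N → ℝ)))) := by
    refine aux_facet ⟨_, Set.smul_mem_smul_set hsS⟩ hrP
      (H.comp ((r : ℝ)⁻¹ • LinearMap.id (R := ℝ) (M := Fin N → ℝ)).toAffineMap) ?_ ?_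
    · rintro _ ⟨q, hq, rfl⟩
      have := hHS q hq
      simpa [smul_smul, inv_mul_cancel₀ hr0'.ne'] using this
    · simpa [smul_smul, inv_mul_cancel₀ hr0'.ne'] using hHv
  obtain ⟨u, huint, hu⟩ := href _ hfac
  -- the interior lattice point coming from the factors
  set y : Fin N → ℝ := (a : ℝ) • iF f + (b : ℝ) • iG g + ((r : ℝ) - a - b) • s with hy
  have hyl : IsLatticePt y := by
    refine aux_lat_add (aux_lat_add ?_ ?_) ?_
    · exact aux_lat_scale iF hiFl (haff hfF) (haff hvFF) hvFl a hfl
    · exact aux_lat_scale iG hiGl (haff hgG) (haff (hVGG p hp)) (hVGl p hp) b hgl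
    · have := aux_lat_zsmul (hSl s hsS) ((r : ℤ) - a - b)
      simpa using this
  have hPconv : Convex ℝ P := by rw [hPS]; exact convex_convexHull _ _
  have hyri : y ∈ intrinsicInterior ℝ ((r : ℝ) • P) := by
    apply aux_ri_of_support (hPconv.smul _)
    · have hmem : ((a : ℝ) / r) • iF f + ((b : ℝ) / r) • iG g + (((r : ℝ) - a - b) / r) • s ∈ P := by
        have h3 := hPconv.sum_mem (t := Finset.univ)
          (w := ![(a : ℝ) / r, (b : ℝ) / r, ((r : ℝ) - a - b) / r])
          (z := ![iF f, iG g, s]) ?_ ?_ ?_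
        · simpa [Fin.sum_univ_three] using h3
        · intro i _
          fin_cases i
          · exact div_nonneg ha0'.le hr0'.le
          · exact div_nonneg hb0'.le hr0'.le
          · exact div_nonneg (by linarith) hr0'.le
        · simp [Fin.sum_univ_three]
          field_simp
          ring
        · intro i _
          fin_cases i
          · exact hFP f hfF
          · exact hGP g hgG
          · exact hSP s hsS
      refine ⟨_, hmem, ?_⟩
      simp only [smul_add, smul_smul, hy, mul_div_cancel₀ _ hr0'.ne']
    · intro l hl
      have hl' : ∀ q ∈ P, (r : ℝ) * l q ≤ l y := fun q hq => by
        have := hl ((r : ℝ) • q) (Set.smul_mem_smul_set hq)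
        simpa using this
      have e : l y = a * l (iF f) + b * l (iG g) + ((r : ℝ) - a - b) * l s := by
        simp [hy]
      obtain ⟨M, hM⟩ : ∃ M : ℝ, l y = r * M := ⟨l y / r, by field_simp⟩
      have hl2 : ∀ q ∈ P, l q ≤ M := fun q hq => by
        have := hl' q hq
        rw [hM] at this
        exact le_of_mul_le_mul_left this hr0'
      have b1 := hl2 _ (hFP f hfF)
      have b2 := hl2 _ (hGP g hgG)
      have b3 := hl2 _ (hSP s hsS)
      have c1 : 0 ≤ (a : ℝ) * (M - l (iF f)) := mul_nonneg ha0'.le (by linarith)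
      have c2 : 0 ≤ (b : ℝ) * (M - l (iG g)) := mul_nonneg hb0'.le (by linarith)
      have c3 : 0 ≤ ((r : ℝ) - a - b) * (M - l s) := mul_nonneg (by linarith) (by linarith)
      have d1 : (a : ℝ) * (M - l (iF f)) = 0 := by
        apply le_antisymm _ c1
        linarith
      have d2 : (b : ℝ) * (M - l (iG g)) = 0 := by
        apply le_antisymm _ c2
        linarith
      have e1 : l (iF f) = M := by
        rcases mul_eq_zero.1 d1 with h | h <;> linarith
      have e2 : l (iG g) = M := by
        rcases mul_eq_zero.1 d2 with h | h <;> linarith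
      have g1 : ∀ q ∈ F, l (iF q) = M := fun q hq => by
        have := hfri (l.toAffineMap.comp iF) (fun q hq => by
          simpa [e1] using hl2 _ (hFP q hq)) q hq
        simpa [e1] using this
      have g2 : ∀ q ∈ G, l (iG q) = M := fun q hq => by
        have := hgri (l.toAffineMap.comp iG) (fun q hq => by
          simpa [e2] using hl2 _ (hGP q hq)) q hq
        simpa [e2] using this
      rintro _ ⟨q, hq, rfl⟩
      have : l.toAffineMap q = M := by
        rw [hPun] at hq
        refine aux_const_hull l.toAffineMap ?_ q hq
        rintro _ (⟨t, ht, rfl⟩ | ⟨t, ht, rfl⟩)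
        · exact g1 t ht
        · exact g2 t ht
      simp only [LinearMap.coe_toAffineMap] at this
      simp [this, hM]
  have hxy : x = y := by
    refine aux_unique (VP.image fun q => (r : ℝ) • q) ?_ hx hxl href hyri hyl
    rw [hPeq, ← convexHull_smul, Finset.coe_image]
    rfl
  -- the height function
  let w : (Fin N → ℝ) →ᵃ[ℝ] ℝ := AffineMap.const ℝ _ (u x + 1) -
    u.comp (AffineMap.id ℝ _ + AffineMap.const ℝ _ (((r : ℝ) - 1) • s))
  have hw : ∀ q, w q = u x + 1 - u (q + ((r : ℝ) - 1) • s) := fun q => rfl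
  have hr1 : (1 : ℝ) ≤ r := by exact_mod_cast hr0
  have hshift : ∀ q : Fin N → ℝ, q + ((r : ℝ) - 1) • s =
      (r : ℝ) • ((r : ℝ)⁻¹ • q + (1 - (r : ℝ)⁻¹) • s) := by
    intro q
    rw [smul_add, smul_smul, smul_smul, mul_inv_cancel₀ hr0'.ne', mul_sub,
      mul_inv_cancel₀ hr0'.ne', one_smul, mul_one]
  have hwS : ∀ q ∈ S, w q = 0 := by
    intro q hq
    rw [hw, hu (q + ((r : ℝ) - 1) • s), sub_self]
    rw [convexHull_smul, hshift]
    apply Set.smul_mem_smul_set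
    apply convex_convexHull ℝ (S : Set (Fin N → ℝ)) (subset_convexHull ℝ _ hq)
      (subset_convexHull ℝ _ hsS)
    · positivity
    · rw [sub_nonneg]; exact inv_le_one_of_one_le₀ hr1
    · ring
  have hwint : IsIntegralOn P w := by
    intro q hq hql
    have h1 : q + ((r : ℝ) - 1) • s ∈ affineSpan ℝ ((r : ℝ) • P) := by
      have h2 := aux_comb_mem hq (haff (hSP s hsS)) (r : ℝ)⁻¹
      have h3 := AffineSubspace.mem_map_of_mem
        ((r : ℝ) • LinearMap.id (R := ℝ) (M := Fin N → ℝ)).toAffineMap h2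
      rw [AffineSubspace.map_span] at h3
      rw [hshift]
      exact h3
    have h2 : IsLatticePt (q + ((r : ℝ) - 1) • s) := by
      have := aux_lat_add hql (aux_lat_zsmul (hSl s hsS) ((r : ℤ) - 1))
      simpa using this
    obtain ⟨z, hz⟩ := huint _ h1 h2
    obtain ⟨z', hz'⟩ := huint x (haff (intrinsicInterior_subset hx)) hxl
    exact ⟨z' + 1 - z, by rw [hw, hz, hz']; push_cast; ring⟩
  -- evaluate at the interior point
  have hwG : ∀ q ∈ G, w (iG q) = 0 := by
    intro q hq
    rw [hGeq] at hq
    exact aux_const_hull (w.comp iG) (fun t ht => hwS _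
      (Finset.mem_union_right _ (Finset.mem_image_of_mem _ ht))) q hq
  have hwF : ∀ q ∈ F, w (iF q) = w v * h q := by
    intro q hq
    rw [hFeq] at hq
    have := aux_const_hull (w.comp iF - (w v) • h) (c := 0) (V := insert vF (SF : Set (Fin n → ℝ)))
      (fun t ht => by
        change w (iF t) - w v * h t = 0
        rcases ht with rfl | ht
        · rw [hhv, mul_one, hv, sub_self]
        · rw [hhS t ht, hwS _ (Finset.mem_union_left _ (Finset.mem_image_of_mem _ ht))]
          simp) q hq
    have h2 : w (iF q) - w v * h q = 0 := this
    linarith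
  have hwy : w (y - ((r : ℝ) - 1) • s) = 1 := by
    rw [hw, sub_add_cancel, hxy]; ring
  have hdec : ∀ q, w q = w.linear q + w 0 := fun q => by
    have := congrFun w.decomp q
    simpa using this
  have hwy2 : w (y - ((r : ℝ) - 1) • s) = a * w (iF f) + b * w (iG g) + (1 - a - b) * w s := by
    rw [hdec, hdec (iF f), hdec (iG g), hdec s]
    simp only [hy, map_add, map_sub, map_smul, smul_eq_mul]
    ring
  rw [hwy, hwG g hgG, hwS s hsS, hwF f hfF] at hwy2
  obtain ⟨z, hz⟩ := aux_int_scale h hhint (haff hfF) (haff hvFF) hvFl a hfl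
  obtain ⟨k, hk⟩ := hwint v (haff hvP) hvl
  have hprod : k * z = 1 := by
    have : (k : ℝ) * z = 1 := by rw [← hk, ← hz]; linarith
    exact_mod_cast this
  have hzpos : 0 ≤ z := by
    have h1 : 0 ≤ h f := by
      have : f ∈ h ⁻¹' Set.Ici 0 := by
        have hf2 := hfF
        rw [hFeq] at hf2
        refine convexHull_min ?_ ((convex_Ici 0).affine_preimage h) hf2
        rintro t (rfl | ht)
        · simp [hhv]
        · simp [hhS t ht]
      exact this
    have : (0 : ℝ) ≤ z := by rw [← hz]; positivity
    exact_mod_cast this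
  have hk1 : k = 1 := by
    rcases Int.eq_one_or_neg_one_of_mul_eq_one hprod with h | h
    · exact h
    · subst h; omega
  exact aux_mk_pyr S ⟨s, hsS⟩ hSl hvl hPS w hwint hwS (by rw [hk, hk1]; simp)
end
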